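/- For every n ∈ ℕ and every ε > 0 there exists δ = δ(n, ε) > 0 such that for every von Neumann algebra M, every Hilbert M-bimodule H, and all almost δ-related n-tuples (ξ_1,…,ξ_n), (η_1,…,η_n) of unit vectors in H, there exists a unitary u ∈ M such that ‖u ξ_k − η_k u‖ < ε for all 1 ≤ k ≤ n. -/

import Mathlib

noncomputable section

/-- A von Neumann algebra is closed under the complex scalar action. -/
instance VonNeumannAlgebra.instSMulMemClass {H : Type*} [NormedAddCommGroup H]
    [InnerProductSpace ℂ H] [CompleteSpace H] :
    SMulMemClass (VonNeumannAlgebra H) ℂ (H →L[ℂ] H) :=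
  ⟨fun {s} c _ ha => s.toStarSubalgebra.smul_mem ha c⟩

/-- An element of a `*`-ring is positive if it is of the form `star z * z`. -/
def IsPosElem {A : Type*} [Mul A] [Star A] (x : A) : Prop :=
  ∃ z : A, x = star z * z

/-- A Hilbert bimodule over a concrete von Neumann algebra `M ⊆ B(K)`: a complex Hilbert
space `E` together with a unital `*`-homomorphism `L : M → B(E)` (the left action) and a
unital `*`-antihomomorphism `M → B(E)` (the right action, encoded as a unital
`*`-homomorphism `R` on the opposite algebra `Mᵐᵒᵖ`) with commuting ranges. -/
structure HilbertBimodule {K : Type*} [NormedAddCommGroup K] [InnerProductSpace ℂ K]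
    [CompleteSpace K] (M : VonNeumannAlgebra K)
    (E : Type*) [NormedAddCommGroup E] [InnerProductSpace ℂ E] [CompleteSpace E] where
  L : M →⋆ₐ[ℂ] (E →L[ℂ] E)
  R : (↥M)ᵐᵒᵖ →⋆ₐ[ℂ] (E →L[ℂ] E)
  commutes : ∀ (x y : M) (ξ : E),
    L x (R (MulOpposite.op y) ξ) = R (MulOpposite.op y) (L x ξ)

namespace HilbertBimodule

variable {K : Type*} [NormedAddCommGroup K] [InnerProductSpace ℂ K] [CompleteSpace K]
  {M : VonNeumannAlgebra K} {E : Type*} [NormedAddCommGroup E] [InnerProductSpace ℂ E]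
  [CompleteSpace E]

/-- The left action `x ξ`. -/
def lsmul (b : HilbertBimodule M E) (x : M) (ξ : E) : E := b.L x ξ

/-- The right action `ξ x`. -/
def rsmul (b : HilbertBimodule M E) (ξ : E) (x : M) : E := b.R (MulOpposite.op x) ξ

end HilbertBimodule

/-- Two `n`-tuples of unit vectors in a Hilbert `M`-bimodule are almost `δ`-related. -/
def HilbertBimodule.AlmostRelated {K : Type*} [NormedAddCommGroup K] [InnerProductSpace ℂ K]
    [CompleteSpace K] {M : VonNeumannAlgebra K}
    {E : Type*} [NormedAddCommGroup E] [InnerProductSpace ℂ E] [CompleteSpace E]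
    (b : HilbertBimodule M E) (δ : ℝ) {n : ℕ} (ξ η : Fin n → E) : Prop :=
  ∀ ε : ℝ, 0 < ε → ∃ (p : ℕ) (a : Fin p → M), ∀ k : Fin n,
    ‖b.lsmul (1 - ∑ j, star (a j) * a j) (ξ k)‖ < ε ∧
    ‖b.lsmul (1 - ∑ j, star (a j) * a j) (η k)‖ < ε ∧
    ‖b.rsmul (ξ k) (1 - ∑ j, star (a j) * a j)‖ < ε ∧
    ‖b.rsmul (η k) (1 - ∑ j, star (a j) * a j)‖ < ε ∧
    ‖b.lsmul (1 - ∑ j, a j * star (a j)) (ξ k)‖ < ε ∧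
    ‖b.lsmul (1 - ∑ j, a j * star (a j)) (η k)‖ < ε ∧
    ‖b.rsmul (ξ k) (1 - ∑ j, a j * star (a j))‖ < ε ∧
    ‖b.rsmul (η k) (1 - ∑ j, a j * star (a j))‖ < ε ∧
    (∑ j, ‖b.lsmul (a j) (ξ k) - b.rsmul (η k) (a j)‖ ^ 2) < δ

universe u v

/-!
A finite family with `∑ aⱼ* aⱼ` and `∑ aⱼ aⱼ*` close to `1` and small total defect
`∑ ‖aⱼ ξ - η aⱼ‖²` is first truncated to a genuine row and column contraction. A random signed sum
of such a family is, after the bounded transform `x ↦ x (1 + x* x)⁻¹`, a single contraction which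
intertwines `ξ` and `η` up to a small error and keeps a fixed amount of mass.

An intertwining contraction `v` of maximal mass must be almost isometric on the vectors. Otherwise a
walk generated by the family and `v` shows that the family has mass between the defects `1 - v v*`
and `1 - v* v`, and a contraction found there in the same way can be added to `v`, increasing its
mass by a definite amount. Since unitaries generate the unit ball (Russo–Dye), an intertwining
contraction of nearly full mass can be replaced by an intertwining unitary.

Tuples reduce to single vectors of the Hilbert sum of `n` copies of the bimodule.
-/

/-! ### Contractions, unitaries and the bounded transform -/

section CStarAlgebra

variable {A : Type*} [CStarAlgebra A]

lemma norm_le_one_of_mem_unitary {u : A} (hu : u ∈ unitary A) : ‖u‖ ≤ 1 := by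
  rcases subsingleton_or_nontrivial A with _ | _
  · simp [Subsingleton.elim u 0]
  · exact (CStarRing.norm_of_mem_unitary hu).le

lemma exists_unitary_mul_abs_of_isUnit [PartialOrder A] [StarOrderedRing A] {y : A}
    (hy : IsUnit y) : ∃ w ∈ unitary A, w * CFC.abs y = y := by
  have abs_star : star (CFC.abs y) = CFC.abs y :=
    (IsSelfAdjoint.of_nonneg (CFC.abs_nonneg y)).star_eq
  have abs_isUnit : IsUnit (CFC.abs y) :=
    (isUnit_pow_iff two_ne_zero).1 <| by rw [CFC.abs_sq]; exact hy.star.mul hy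
  obtain ⟨h, hh⟩ := abs_isUnit
  have inv_star : star (↑h⁻¹ : A) = ↑h⁻¹ := by
    rw [← Units.coe_star, star_inv, show star h = h from Units.ext (by simpa [hh] using abs_star)]
  refine ⟨y * ↑h⁻¹, (hy.mul h⁻¹.isUnit).mem_unitary_of_star_mul_self ?_, by simp [← hh]⟩
  calc star (y * ↑h⁻¹) * (y * ↑h⁻¹) = ↑h⁻¹ * (star y * y) * ↑h⁻¹ := by
        rw [star_mul, inv_star]; noncomm_ring
    _ = ↑h⁻¹ * (h * h) * ↑h⁻¹ := by rw [hh, CFC.abs_mul_abs]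
    _ = 1 := by simp

lemma exists_unitary_add_unitary_eq_two_smul {y : A} (hy : IsUnit y) (hy_norm : ‖y‖ ≤ 1) :
    ∃ w₁ ∈ unitary A, ∃ w₂ ∈ unitary A, w₁ + w₂ = (2 : ℂ) • y := by
  let _ := CStarAlgebra.spectralOrder A
  let _ := CStarAlgebra.spectralOrderedRing A
  obtain ⟨w, hw, hwy⟩ := exists_unitary_mul_abs_of_isUnit hy
  set h : A := CFC.abs y
  have h_sa : IsSelfAdjoint h := .of_nonneg (CFC.abs_nonneg y)
  have v_mem := h_sa.self_add_I_smul_cfcSqrt_sub_sq_mem_unitary h (by rwa [CFC.norm_abs])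
  set q : A := CFC.sqrt (1 - h ^ 2)
  have q_sa : IsSelfAdjoint q := .of_nonneg (CFC.sqrt_nonneg _)
  refine ⟨w * (h + Complex.I • q), mul_mem hw v_mem, w * star (h + Complex.I • q),
    mul_mem hw (Unitary.star_mem v_mem), ?_⟩
  calc w * (h + Complex.I • q) + w * star (h + Complex.I • q) = w * ((2 : ℂ) • h) := by
        rw [star_add, star_smul, h_sa.star_eq, q_sa.star_eq, ← mul_add, two_smul,
          Complex.star_def, Complex.conj_I, neg_smul]
        abel_nf
    _ = (2 : ℂ) • y := by rw [mul_smul_comm, hwy]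

/- Half the sum is invertible and lies in the unit ball, and an invertible contraction with polar
decomposition `w * h` is the mean of the unitaries `w * (h ± i √(1 - h²))`. -/
lemma exists_unitary_add_unitary_eq_add {u x : A} (hu : u ∈ unitary A) (hx : ‖x‖ < 1) :
    ∃ w₁ ∈ unitary A, ∃ w₂ ∈ unitary A, w₁ + w₂ = u + x := by
  have norm_star_mul_le : ‖star u * x‖ ≤ ‖x‖ :=
    (CStarRing.norm_mem_unitary_mul x (Unitary.star_mem hu)).le
  have factor : u + x = u * (1 - -(star u * x)) := by
    rw [sub_neg_eq_add, mul_add, mul_one, ← mul_assoc, Unitary.mul_star_self_of_mem hu, one_mul]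
  have sum_isUnit : IsUnit (u + x) := by
    rw [factor]
    exact (Unitary.toUnits ⟨u, hu⟩).isUnit.mul
      (isUnit_one_sub_of_norm_lt_one (by rw [norm_neg]; exact norm_star_mul_le.trans_lt hx))
  have sum_norm : ‖u + x‖ ≤ 2 := by
    have := norm_le_one_of_mem_unitary hu
    linarith [norm_add_le u x]
  obtain ⟨w₁, hw₁, w₂, hw₂, hw⟩ := exists_unitary_add_unitary_eq_two_smul (y := (2⁻¹ : ℂ) • (u + x))
    ((Units.mk0 (2⁻¹ : ℂ) (by norm_num) • sum_isUnit.unit).isUnit)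
    (by rw [norm_smul]; norm_num; linarith)
  exact ⟨w₁, hw₁, w₂, hw₂, by rw [hw, smul_smul]; norm_num⟩

/- With `S` the supremum of `g` over the unitaries, splitting `u + x` into two unitaries gives
`S + g x ≤ 2 S` for every `x` in the open unit ball. -/
lemma le_of_forall_unitary_le {g : A →ₗ[ℝ] ℝ} {C : ℝ} (hg : ∀ u ∈ unitary A, g u ≤ C) {x : A}
    (hx : ‖x‖ ≤ 1) : g x ≤ C := by
  set S : ℝ := sSup (g '' (unitary A : Set A))
  have g_le : ∀ u ∈ unitary A, g u ≤ S := fun u hu =>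
    le_csSup ⟨C, Set.forall_mem_image.2 hg⟩ (Set.mem_image_of_mem g hu)
  have nonempty : (g '' (unitary A : Set A)).Nonempty := ⟨g 1, 1, one_mem _, rfl⟩
  have S_le : S ≤ C := csSup_le nonempty (Set.forall_mem_image.2 hg)
  have ball_le {y : A} (hy : ‖y‖ < 1) : g y ≤ S := by
    suffices S ≤ 2 * S - g y by linarith
    refine csSup_le nonempty (Set.forall_mem_image.2 fun u hu => ?_)
    obtain ⟨w₁, hw₁, w₂, hw₂, hw⟩ := exists_unitary_add_unitary_eq_add hu hy
    have := congrArg g hw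
    rw [map_add, map_add] at this
    linarith [g_le w₁ hw₁, g_le w₂ hw₂]
  have scaled_le : ∀ t ∈ Set.Ico (0 : ℝ) 1, t * g x ≤ C := fun t ht => by
    rw [← smul_eq_mul, ← map_smul]
    refine (ball_le ?_).trans S_le
    rw [norm_smul, Real.norm_of_nonneg ht.1]
    exact (mul_le_of_le_one_right ht.1 hx).trans_lt ht.2
  have limit : Filter.Tendsto (fun t : ℝ => t * g x) (nhdsWithin 1 (Set.Iio 1)) (nhds (g x)) := by
    simpa using
      ((Filter.tendsto_id (α := ℝ) (x := nhds 1)).mul_const (g x)).mono_left nhdsWithin_le_nhds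
  refine le_of_tendsto limit ?_
  filter_upwards [Ico_mem_nhdsLT zero_lt_one] with t ht using scaled_le t ht

end CStarAlgebra

section Contractions

variable {A : Type*} [CStarAlgebra A] [PartialOrder A] [StarOrderedRing A]

lemma star_mul_self_le_one_iff {c : A} : star c * c ≤ 1 ↔ ‖c‖ ≤ 1 := by
  rw [← CStarAlgebra.norm_le_one_iff_of_nonneg (star c * c) (star_mul_self_nonneg c),
    CStarRing.norm_star_mul_self, ← abs_le_one_iff_mul_self_le_one, abs_norm]

lemma mul_star_self_le_one_iff {c : A} : c * star c ≤ 1 ↔ ‖c‖ ≤ 1 := by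
  rw [← norm_star c, ← star_mul_self_le_one_iff, star_star]

lemma mul_self_le_self_of_nonneg_of_le_one {c : A} (hc_nonneg : 0 ≤ c) (hc : c ≤ 1) :
    c * c ≤ c := by
  simpa [sq] using CStarAlgebra.pow_antitone hc_nonneg hc one_le_two

end Contractions

section BoundedTransform

variable {A : Type*} [CStarAlgebra A]

/-- The positive contraction `(1 + x* x)⁻¹`. -/
def sqResolvent (x : A) : A := Ring.inverse (1 + star x * x)

/-- The transform `x ↦ x (1 + x* x)⁻¹`, which turns every element into a contraction and moves a
vector `ζ` by at most `‖x* x ζ‖`. -/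
def boundedTransform (x : A) : A := x * sqResolvent x

lemma isUnit_one_add_star_mul_self (x : A) : IsUnit (1 + star x * x) := by
  let _ := CStarAlgebra.spectralOrder A
  let _ := CStarAlgebra.spectralOrderedRing A
  exact CStarAlgebra.isUnit_of_le 1 (le_add_of_nonneg_right (star_mul_self_nonneg x))
    isStrictlyPositive_one

lemma sqResolvent_mul_cancel (x : A) : sqResolvent x * (1 + star x * x) = 1 :=
  Ring.inverse_mul_cancel _ (isUnit_one_add_star_mul_self x)

lemma mul_sqResolvent_cancel (x : A) : (1 + star x * x) * sqResolvent x = 1 :=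
  Ring.mul_inverse_cancel _ (isUnit_one_add_star_mul_self x)

lemma star_sqResolvent (x : A) : star (sqResolvent x) = sqResolvent x := by
  rw [sqResolvent, ← Ring.inverse_star, star_add, star_one, star_mul, star_star]

lemma sqResolvent_star_mul (x : A) : sqResolvent (star x) * x = boundedTransform x := by
  have := sqResolvent_mul_cancel (star x)
  rw [star_star] at this
  calc sqResolvent (star x) * x
      = sqResolvent (star x) * x * ((1 + star x * x) * sqResolvent x) := by
        rw [mul_sqResolvent_cancel, mul_one]
    _ = sqResolvent (star x) * (1 + x * star x) * (x * sqResolvent x) := by noncomm_ring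
    _ = boundedTransform x := by rw [this, one_mul, boundedTransform]

lemma star_boundedTransform (x : A) : star (boundedTransform x) = boundedTransform (star x) := by
  rw [boundedTransform, star_mul, star_sqResolvent, ← sqResolvent_star_mul, star_star]

lemma sqResolvent_add_star_mul_boundedTransform (x : A) :
    sqResolvent x + star x * boundedTransform x = 1 := by
  rw [boundedTransform, ← mul_sqResolvent_cancel x]; noncomm_ring

lemma sqResolvent_star_add_boundedTransform_mul_star (x : A) :
    sqResolvent (star x) + boundedTransform x * star x = 1 := by
  rw [← sqResolvent_star_mul, ← sqResolvent_mul_cancel (star x), star_star]; noncomm_ring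

lemma sub_boundedTransform (x : A) :
    x - boundedTransform x = boundedTransform x * (star x * x) := by
  rw [sub_eq_iff_eq_add']
  calc x = x * (sqResolvent x * (1 + star x * x)) := by rw [sqResolvent_mul_cancel, mul_one]
    _ = boundedTransform x + boundedTransform x * (star x * x) := by
      rw [boundedTransform]; noncomm_ring

section Order

variable [PartialOrder A] [StarOrderedRing A]

lemma sqResolvent_nonneg (x : A) : 0 ≤ sqResolvent x := by
  have conj := star_left_conjugate_nonneg
    (add_nonneg zero_le_one (star_mul_self_nonneg x)) (sqResolvent x)
  rwa [star_sqResolvent, sqResolvent_mul_cancel, one_mul] at conj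

/- `R² + R (x* x) R = R`, so `R² ≤ R`. -/
lemma sqResolvent_sq_le (x : A) : sqResolvent x * sqResolvent x ≤ sqResolvent x := by
  have conj := star_left_conjugate_nonneg (star_mul_self_nonneg x) (sqResolvent x)
  rw [star_sqResolvent] at conj
  calc sqResolvent x * sqResolvent x
      ≤ sqResolvent x * sqResolvent x + sqResolvent x * (star x * x) * sqResolvent x :=
        le_add_of_nonneg_right conj
    _ = sqResolvent x * (1 + star x * x) * sqResolvent x := by noncomm_ring
    _ = sqResolvent x := by rw [sqResolvent_mul_cancel, one_mul]

end Order

lemma norm_sqResolvent_le_one (x : A) : ‖sqResolvent x‖ ≤ 1 := by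
  let _ := CStarAlgebra.spectralOrder A
  let _ := CStarAlgebra.spectralOrderedRing A
  have := CStarAlgebra.norm_le_norm_of_nonneg_of_le
    (star_mul_self_nonneg (sqResolvent x)) (by simpa [star_sqResolvent] using sqResolvent_sq_le x)
  rw [CStarRing.norm_star_mul_self] at this
  nlinarith [norm_nonneg (sqResolvent x)]

lemma norm_boundedTransform_le_one (x : A) : ‖boundedTransform x‖ ≤ 1 := by
  let _ := CStarAlgebra.spectralOrder A
  let _ := CStarAlgebra.spectralOrderedRing A
  have le_one : sqResolvent x ≤ 1 :=
    (CStarAlgebra.norm_le_one_iff_of_nonneg _ (sqResolvent_nonneg x)).1 (norm_sqResolvent_le_one x)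
  refine star_mul_self_le_one_iff.1 ?_
  calc star (boundedTransform x) * boundedTransform x
      = sqResolvent x * (1 + star x * x) * sqResolvent x - sqResolvent x * sqResolvent x := by
        rw [boundedTransform, star_mul, star_sqResolvent]; noncomm_ring
    _ = sqResolvent x - sqResolvent x * sqResolvent x := by
        rw [sqResolvent_mul_cancel, one_mul]
    _ ≤ sqResolvent x := sub_le_self _ (by
        simpa [star_sqResolvent] using star_mul_self_nonneg (sqResolvent x))
    _ ≤ 1 := le_one

end BoundedTransform

/-! ### Bimodules and intertwiners -/

/-- A Hilbert bimodule over a unital C*-algebra `A`: two commuting unital `*`-representations, of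
`A` and of the opposite algebra, on a Hilbert space. -/
structure StarBimodule (A E : Type*) [CStarAlgebra A] [NormedAddCommGroup E]
    [InnerProductSpace ℂ E] [CompleteSpace E] where
  left : A →⋆ₐ[ℂ] (E →L[ℂ] E)
  rightHom : Aᵐᵒᵖ →⋆ₐ[ℂ] (E →L[ℂ] E)
  left_rightHom_comm : ∀ (x : A) (y : Aᵐᵒᵖ) (ζ : E),
    left x (rightHom y ζ) = rightHom y (left x ζ)

namespace StarBimodule

open MulOpposite

variable {A E : Type*} [CStarAlgebra A] [NormedAddCommGroup E] [InnerProductSpace ℂ E]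
  [CompleteSpace E] (b : StarBimodule A E)

section Actions

/-- The right action `ζ x`, as a linear map in `x`. -/
def right : A →ₗ[ℂ] (E →L[ℂ] E) :=
  b.rightHom.toAlgHom.toLinearMap ∘ₗ (opLinearEquiv ℂ).toLinearMap

/-- The same Hilbert space over the opposite algebra. It reduces statements about the right action
to statements about the left action. -/
def opposite : StarBimodule Aᵐᵒᵖ E where
  left := b.rightHom
  rightHom :=
    { toFun := fun x => b.left x.unop.unop
      map_one' := by simp
      map_mul' := fun x y => by simp
      map_zero' := by simp
      map_add' := fun x y => by simp
      commutes' := fun c => by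
        rw [MulOpposite.algebraMap_apply, MulOpposite.algebraMap_apply, unop_op, unop_op,
          AlgHomClass.commutes]
      map_star' := fun x => by simp [map_star] }
  left_rightHom_comm := fun x y ζ => (b.left_rightHom_comm y.unop.unop x ζ).symm

lemma opposite_left_op (x : A) : b.opposite.left (op x) = b.right x := rfl

lemma left_right_comm (x y : A) (ζ : E) : b.left x (b.right y ζ) = b.right y (b.left x ζ) :=
  b.left_rightHom_comm x (op y) ζ

lemma left_one_apply (ζ : E) : b.left 1 ζ = ζ := by simp

lemma right_one_apply (ζ : E) : b.right 1 ζ = ζ := b.opposite.left_one_apply ζ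

lemma left_mul_apply (x y : A) (ζ : E) : b.left (x * y) ζ = b.left x (b.left y ζ) := by simp

lemma right_mul_apply (x y : A) (ζ : E) : b.right (x * y) ζ = b.right y (b.right x ζ) :=
  b.opposite.left_mul_apply (op y) (op x) ζ

lemma inner_left_left (x : A) (ζ θ : E) :
    inner ℂ (b.left x ζ) θ = inner ℂ ζ (b.left (star x) θ) := by
  rw [map_star, ContinuousLinearMap.star_eq_adjoint, ContinuousLinearMap.adjoint_inner_right]

lemma inner_right_left (x : A) (ζ θ : E) :
    inner ℂ (b.right x ζ) θ = inner ℂ ζ (b.right (star x) θ) :=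
  b.opposite.inner_left_left (op x) ζ θ

lemma norm_left_le (x : A) (ζ : E) : ‖b.left x ζ‖ ≤ ‖x‖ * ‖ζ‖ :=
  ContinuousLinearMap.le_of_opNorm_le _ (NonUnitalStarAlgHom.norm_apply_le b.left x) ζ

lemma norm_left_le_of_norm_le_one {x : A} (hx : ‖x‖ ≤ 1) (ζ : E) : ‖b.left x ζ‖ ≤ ‖ζ‖ :=
  (b.norm_left_le x ζ).trans (mul_le_of_le_one_left (norm_nonneg _) hx)

lemma norm_right_le_of_norm_le_one {x : A} (hx : ‖x‖ ≤ 1) (ζ : E) : ‖b.right x ζ‖ ≤ ‖ζ‖ :=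
  b.opposite.norm_left_le_of_norm_le_one (x := op x) hx ζ

lemma norm_left_sq (x : A) (ζ : E) :
    ‖b.left x ζ‖ ^ 2 = (inner ℂ (b.left (star x * x) ζ) ζ).re := by
  rw [left_mul_apply, inner_left_left, star_star]
  exact (inner_self_eq_norm_sq (𝕜 := ℂ) (b.left x ζ)).symm

lemma norm_right_sq (x : A) (ζ : E) :
    ‖b.right x ζ‖ ^ 2 = (inner ℂ (b.right (x * star x) ζ) ζ).re :=
  b.opposite.norm_left_sq (op x) ζ

lemma sum_norm_left_sq {ι : Type*} [Fintype ι] (w : ι → A) (ζ : E) :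
    ∑ i, ‖b.left (w i) ζ‖ ^ 2 = (inner ℂ (b.left (∑ i, star (w i) * w i) ζ) ζ).re := by
  simp only [map_sum, sum_apply, sum_inner, Complex.re_sum, norm_left_sq]

lemma sum_norm_right_sq {ι : Type*} [Fintype ι] (w : ι → A) (ζ : E) :
    ∑ i, ‖b.right (w i) ζ‖ ^ 2 = (inner ℂ (b.right (∑ i, w i * star (w i)) ζ) ζ).re := by
  rw [← opposite_left_op, Finset.op_sum]
  exact b.opposite.sum_norm_left_sq (fun i => op (w i)) ζ

lemma norm_left_left_star_sq_le {r : A} (hr : ‖r‖ ≤ 1) (x : A) {ζ : E} (hζ : ‖ζ‖ ≤ 1) :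
    ‖b.left r (b.left (star x) ζ)‖ ^ 2 ≤ ‖b.left (x * star x) ζ‖ :=
  calc ‖b.left r (b.left (star x) ζ)‖ ^ 2 ≤ ‖b.left (star x) ζ‖ ^ 2 := by
        gcongr
        exact b.norm_left_le_of_norm_le_one hr _
    _ ≤ ‖b.left (x * star x) ζ‖ * ‖ζ‖ := by
        rw [norm_left_sq, star_star]
        exact re_inner_le_norm (𝕜 := ℂ) _ _
    _ ≤ ‖b.left (x * star x) ζ‖ := mul_le_of_le_one_right (norm_nonneg _) hζ

section Order

variable [PartialOrder A] [StarOrderedRing A]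

lemma re_inner_left_nonneg {x : A} (hx : 0 ≤ x) (ζ : E) : 0 ≤ (inner ℂ (b.left x ζ) ζ).re := by
  obtain ⟨c, rfl⟩ := CStarAlgebra.nonneg_iff_eq_star_mul_self.1 hx
  rw [← norm_left_sq]
  positivity

lemma re_inner_left_mono {x y : A} (hxy : x ≤ y) (ζ : E) :
    (inner ℂ (b.left x ζ) ζ).re ≤ (inner ℂ (b.left y ζ) ζ).re := by
  have := b.re_inner_left_nonneg (sub_nonneg.2 hxy) ζ
  rw [map_sub, sub_apply, inner_sub_left, Complex.sub_re] at this
  linarith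

lemma sum_norm_left_sq_le {ι : Type*} [Fintype ι] {w : ι → A} (hw : ∑ i, star (w i) * w i ≤ 1)
    (ζ : E) : ∑ i, ‖b.left (w i) ζ‖ ^ 2 ≤ ‖ζ‖ ^ 2 := by
  rw [sum_norm_left_sq]
  refine (b.re_inner_left_mono hw ζ).trans_eq ?_
  rw [left_one_apply]
  exact inner_self_eq_norm_sq (𝕜 := ℂ) ζ

lemma sum_norm_right_sq_le {ι : Type*} [Fintype ι] {w : ι → A} (hw : ∑ i, w i * star (w i) ≤ 1)
    (ζ : E) : ∑ i, ‖b.right (w i) ζ‖ ^ 2 ≤ ‖ζ‖ ^ 2 := by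
  refine b.opposite.sum_norm_left_sq_le (w := fun i => op (w i)) ?_ ζ
  simp only [← op_star, ← op_mul, ← Finset.op_sum]
  exact hw

end Order

end Actions

section Defect

/-- The defect `x ξ - η x` of `x` as an intertwiner of `ξ` and `η`. -/
def defect (ξ η : E) : A →ₗ[ℂ] E :=
  (ContinuousLinearMap.apply ℂ E ξ).toLinearMap ∘ₗ b.left.toAlgHom.toLinearMap -
    (ContinuousLinearMap.apply ℂ E η).toLinearMap ∘ₗ b.right

lemma defect_apply (ξ η : E) (x : A) : b.defect ξ η x = b.left x ξ - b.right x η := rfl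

lemma defect_one (ξ : E) : b.defect ξ ξ 1 = 0 := by
  rw [defect_apply, left_one_apply, right_one_apply, sub_self]

lemma defect_mul (ξ η ζ : E) (x y : A) :
    b.defect ξ ζ (y * x) = b.left y (b.defect ξ η x) + b.right x (b.defect η ζ y) := by
  simp only [defect_apply, left_mul_apply, right_mul_apply, map_sub, left_right_comm]
  abel

/-- Both `x` and `x*` intertwine `ξ` and `η` up to `τ`: `x ξ ≈ η x` and `x* η ≈ ξ x*`. -/
structure AlmostIntertwines (τ : ℝ) (x : A) (ξ η : E) : Prop where
  norm_defect_le : ‖b.defect ξ η x‖ ≤ τ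
  norm_defect_star_le : ‖b.defect η ξ (star x)‖ ≤ τ

namespace AlmostIntertwines

variable {b} {x y : A} {ξ η ζ : E} {τ τ₁ τ₂ : ℝ}

protected lemma mono (h : b.AlmostIntertwines τ₁ x ξ η) (hτ : τ₁ ≤ τ₂) :
    b.AlmostIntertwines τ₂ x ξ η :=
  ⟨h.1.trans hτ, h.2.trans hτ⟩

protected lemma star (h : b.AlmostIntertwines τ x ξ η) : b.AlmostIntertwines τ (star x) η ξ :=
  ⟨h.2, by rw [star_star]; exact h.1⟩

protected lemma add (hx : b.AlmostIntertwines τ₁ x ξ η) (hy : b.AlmostIntertwines τ₂ y ξ η) :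
    b.AlmostIntertwines (τ₁ + τ₂) (x + y) ξ η where
  norm_defect_le := by rw [map_add]; exact norm_add_le_of_le hx.1 hy.1
  norm_defect_star_le := by rw [star_add, map_add]; exact norm_add_le_of_le hx.2 hy.2

protected lemma smul (h : b.AlmostIntertwines τ x ξ η) (c : ℂ) :
    b.AlmostIntertwines (‖c‖ * τ) (c • x) ξ η where
  norm_defect_le := by
    rw [map_smul, norm_smul]
    exact mul_le_mul_of_nonneg_left h.1 (norm_nonneg c)
  norm_defect_star_le := by
    rw [star_smul, map_smul, norm_smul, norm_star]
    exact mul_le_mul_of_nonneg_left h.2 (norm_nonneg c)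

protected lemma neg (h : b.AlmostIntertwines τ x ξ η) : b.AlmostIntertwines τ (-x) ξ η := by
  simpa using h.smul (-1)

protected lemma one_sub (h : b.AlmostIntertwines τ x ξ ξ) : b.AlmostIntertwines τ (1 - x) ξ ξ where
  norm_defect_le := by rw [map_sub, defect_one, zero_sub, norm_neg]; exact h.1
  norm_defect_star_le := by
    rw [star_sub, star_one, map_sub, defect_one, zero_sub, norm_neg]; exact h.2

protected lemma mul (hy : b.AlmostIntertwines τ₂ y η ζ) (hx : b.AlmostIntertwines τ₁ x ξ η)
    (hy_norm : ‖y‖ ≤ 1) (hx_norm : ‖x‖ ≤ 1) : b.AlmostIntertwines (τ₁ + τ₂) (y * x) ξ ζ where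
  norm_defect_le := by
    rw [b.defect_mul ξ η ζ]
    exact norm_add_le_of_le ((b.norm_left_le_of_norm_le_one hy_norm _).trans hx.1)
      ((b.norm_right_le_of_norm_le_one hx_norm _).trans hy.1)
  norm_defect_star_le := by
    rw [star_mul, b.defect_mul ζ η ξ, add_comm]
    exact norm_add_le_of_le
      ((b.norm_right_le_of_norm_le_one (by rwa [norm_star]) _).trans hx.2)
      ((b.norm_left_le_of_norm_le_one (by rwa [norm_star]) _).trans hy.2)

lemma one_sub_mul_star (h : b.AlmostIntertwines τ x ξ η) (hx : ‖x‖ ≤ 1) :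
    b.AlmostIntertwines (τ + τ) (1 - x * star x) η η :=
  (h.mul h.star hx (by rwa [norm_star])).one_sub

lemma one_sub_star_mul (h : b.AlmostIntertwines τ x ξ η) (hx : ‖x‖ ≤ 1) :
    b.AlmostIntertwines (τ + τ) (1 - star x * x) ξ ξ :=
  (h.star.mul h (by rwa [norm_star]) hx).one_sub

end AlmostIntertwines

lemma inner_left_star_right_star (x : A) (ξ η : E) :
    inner ℂ (b.left (star x) η) (b.right (star x) ξ) = inner ℂ (b.right x η) (b.left x ξ) := by
  rw [inner_left_left, star_star, left_right_comm, inner_right_left]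

lemma AlmostIntertwines.abs_norm_sq_sub_norm_sq_le {b : StarBimodule A E} {v : A} {ξ η : E}
    {τ : ℝ} (h : b.AlmostIntertwines τ v ξ η) (hv : ‖v‖ ≤ 1) (hξ : ‖ξ‖ = 1) (hη : ‖η‖ = 1) :
    |‖b.left (star v) η‖ ^ 2 - ‖b.left v ξ‖ ^ 2| ≤ 2 * τ := by
  have difference : ((‖b.left (star v) η‖ ^ 2 - ‖b.left v ξ‖ ^ 2 : ℝ) : ℂ) =
      inner ℂ (b.left (star v) η) (b.defect η ξ (star v)) -
        inner ℂ (b.defect ξ η v) (b.left v ξ) := by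
    rw [defect_apply, defect_apply, inner_sub_right, inner_sub_left, inner_left_star_right_star,
      inner_self_eq_norm_sq_to_K, inner_self_eq_norm_sq_to_K]
    push_cast
    simp
  have left_le : ‖b.left v ξ‖ ≤ 1 := hξ ▸ b.norm_left_le_of_norm_le_one hv ξ
  have left_star_le : ‖b.left (star v) η‖ ≤ 1 :=
    hη ▸ b.norm_left_le_of_norm_le_one (by rwa [norm_star]) η
  rw [← Real.norm_eq_abs, ← Complex.norm_real, difference, two_mul]
  refine norm_sub_le_of_le ?_ ?_
  · exact ((norm_inner_le_norm _ _).trans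
      (mul_le_of_le_one_left (norm_nonneg _) left_star_le)).trans h.2
  · exact ((norm_inner_le_norm _ _).trans
      (mul_le_of_le_one_right (norm_nonneg _) left_le)).trans h.1

end Defect

section UnitaryApproximation

variable {b}

/- `u ↦ Re ⟨u ξ, v ξ⟩ + Re ⟨η u, η v⟩` nearly attains on unitaries its value at `v`, which is
close to `2`, so some unitary acts on `ξ` from the left and on `η` from the right like `v`. -/
lemma exists_unitary_norm_sub_sq_le {v : A} {ξ η : E} {κ : ℝ} (hκ : 0 < κ) (hv : ‖v‖ ≤ 1)
    (hξ : ‖ξ‖ = 1) (hη : ‖η‖ = 1) :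
    ∃ u ∈ unitary A, ‖b.left u ξ - b.left v ξ‖ ^ 2 + ‖b.right u η - b.right v η‖ ^ 2 ≤
      2 - ‖b.left v ξ‖ ^ 2 - ‖b.right v η‖ ^ 2 + 2 * κ := by
  let overlap : A →ₗ[ℝ] ℝ := Complex.reLm ∘ₗ
    ((innerSL ℂ (b.left v ξ)).toLinearMap ∘ₗ (ContinuousLinearMap.apply ℂ E ξ).toLinearMap ∘ₗ
        b.left.toAlgHom.toLinearMap +
      (innerSL ℂ (b.right v η)).toLinearMap ∘ₗ (ContinuousLinearMap.apply ℂ E η).toLinearMap ∘ₗ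
        b.right).restrictScalars ℝ
  have overlap_apply (x : A) : overlap x =
      (inner ℂ (b.left v ξ) (b.left x ξ)).re + (inner ℂ (b.right v η) (b.right x η)).re := rfl
  obtain ⟨u, hu, overlap_lt⟩ : ∃ u ∈ unitary A, overlap v - κ < overlap u := by
    by_contra! bound
    linarith [le_of_forall_unitary_le bound hv]
  refine ⟨u, hu, ?_⟩
  have u_norm := norm_le_one_of_mem_unitary hu
  have left_le : ‖b.left u ξ‖ ^ 2 ≤ 1 :=
    pow_le_one₀ (norm_nonneg _) (hξ ▸ b.norm_left_le_of_norm_le_one u_norm ξ)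
  have right_le : ‖b.right u η‖ ^ 2 ≤ 1 :=
    pow_le_one₀ (norm_nonneg _) (hη ▸ b.norm_right_le_of_norm_le_one u_norm η)
  have left_sq : (inner ℂ (b.left v ξ) (b.left v ξ)).re = ‖b.left v ξ‖ ^ 2 :=
    inner_self_eq_norm_sq (𝕜 := ℂ) _
  have right_sq : (inner ℂ (b.right v η) (b.right v η)).re = ‖b.right v η‖ ^ 2 :=
    inner_self_eq_norm_sq (𝕜 := ℂ) _
  rw [overlap_apply, overlap_apply, left_sq, right_sq] at overlap_lt
  rw [norm_sub_rev (b.left u ξ), norm_sub_rev (b.right u η), @norm_sub_sq ℂ, @norm_sub_sq ℂ]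
  simp only [RCLike.re_eq_complex_re]
  linarith

lemma AlmostIntertwines.exists_unitary {v : A} {ξ η : E} {κ : ℝ}
    (h : b.AlmostIntertwines κ v ξ η) (hκ : 0 < κ) (hv : ‖v‖ ≤ 1) (hξ : ‖ξ‖ = 1) (hη : ‖η‖ = 1)
    (mass : 1 - κ ≤ ‖b.left (star v) η‖ ^ 2) :
    ∃ u ∈ unitary A, ‖b.defect ξ η u‖ ≤ κ + √(20 * κ) := by
  obtain ⟨u, hu, hu_le⟩ := exists_unitary_norm_sub_sq_le (b := b) hκ hv hξ hη
  refine ⟨u, hu, ?_⟩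
  have left_le : ‖b.left v ξ‖ ≤ 1 := hξ ▸ b.norm_left_le_of_norm_le_one hv ξ
  have right_le : ‖b.right v η‖ ≤ 1 := hη ▸ b.norm_right_le_of_norm_le_one hv η
  have left_mass : 1 - 3 * κ ≤ ‖b.left v ξ‖ ^ 2 := by
    linarith [(abs_le.1 (h.abs_norm_sq_sub_norm_sq_le hv hξ hη)).2]
  have right_mass : 1 - 5 * κ ≤ ‖b.right v η‖ ^ 2 := by
    have : ‖b.left v ξ‖ - ‖b.right v η‖ ≤ κ := (norm_sub_norm_le _ _).trans h.1
    nlinarith [norm_nonneg (b.left v ξ), norm_nonneg (b.right v η)]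
  have deviation : ‖b.left u ξ - b.left v ξ‖ + ‖b.right u η - b.right v η‖ ≤ √(20 * κ) := by
    refine Real.le_sqrt_of_sq_le ?_
    linarith [add_sq_le (a := ‖b.left u ξ - b.left v ξ‖) (b := ‖b.right u η - b.right v η‖)]
  calc ‖b.defect ξ η u‖
      = ‖b.defect ξ η v + ((b.left u ξ - b.left v ξ) - (b.right u η - b.right v η))‖ := by
        rw [defect_apply, defect_apply]; congr 1; abel
    _ ≤ κ + √(20 * κ) := norm_add_le_of_le h.1 ((norm_sub_le _ _).trans deviation)

end UnitaryApproximation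

section BoundedTransform

lemma defect_boundedTransform (x : A) (ξ η : E) :
    b.defect ξ η (boundedTransform x) =
      b.left (sqResolvent (star x)) (b.right (sqResolvent x) (b.defect ξ η x)) -
        b.left (boundedTransform x) (b.right (boundedTransform x) (b.defect η ξ (star x))) := by
  set R := sqResolvent x
  set R' := sqResolvent (star x)
  set Y := boundedTransform x with hY
  have left_split : b.left Y ξ = b.left Y (b.right R ξ) + b.left Y (b.right (star x * Y) ξ) := by
    rw [← map_add, ← add_apply, ← map_add b.right,
      sqResolvent_add_star_mul_boundedTransform, right_one_apply]
  have right_split : b.right Y η = b.left R' (b.right Y η) + b.left (Y * star x) (b.right Y η) := by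
    rw [← add_apply, ← map_add b.left,
      sqResolvent_star_add_boundedTransform_mul_star, left_one_apply]
  have left_term : b.left R' (b.right R (b.left x ξ)) = b.left Y (b.right R ξ) := by
    rw [← left_right_comm, ← left_mul_apply, sqResolvent_star_mul]
  have right_term : b.left R' (b.right R (b.right x η)) = b.left R' (b.right Y η) := by
    rw [← right_mul_apply, hY, boundedTransform]
  rw [defect_apply, defect_apply, defect_apply, left_split]
  nth_rw 1 [right_split]
  simp only [map_sub, left_term, right_term, left_mul_apply, right_mul_apply, left_right_comm]
  abel

lemma AlmostIntertwines.norm_defect_boundedTransform_le {b : StarBimodule A E} {x : A} {ξ η : E}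
    {τ : ℝ} (h : b.AlmostIntertwines τ x ξ η) :
    ‖b.defect ξ η (boundedTransform x)‖ ≤ 2 * τ := by
  rw [defect_boundedTransform, two_mul]
  refine norm_sub_le_of_le ?_ ?_
  · exact ((b.norm_left_le_of_norm_le_one (norm_sqResolvent_le_one _) _).trans
      (b.norm_right_le_of_norm_le_one (norm_sqResolvent_le_one _) _)).trans h.1
  · exact ((b.norm_left_le_of_norm_le_one (norm_boundedTransform_le_one _) _).trans
      (b.norm_right_le_of_norm_le_one (norm_boundedTransform_le_one _) _)).trans h.2

protected lemma AlmostIntertwines.boundedTransform {b : StarBimodule A E} {x : A} {ξ η : E} {τ : ℝ}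
    (h : b.AlmostIntertwines τ x ξ η) : b.AlmostIntertwines (2 * τ) (boundedTransform x) ξ η :=
  ⟨h.norm_defect_boundedTransform_le, by
    rw [star_boundedTransform]; exact h.star.norm_defect_boundedTransform_le⟩

lemma norm_left_sub_boundedTransform_le (x : A) (ζ : E) :
    ‖b.left x ζ - b.left (boundedTransform x) ζ‖ ≤ ‖b.left (star x * x) ζ‖ := by
  rw [← sub_apply, ← map_sub, sub_boundedTransform, left_mul_apply]
  exact b.norm_left_le_of_norm_le_one (norm_boundedTransform_le_one x) _

end BoundedTransform

end StarBimodule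

/-! ### Random signed sums -/

section RandomSigns

variable {V : Type*} [AddCommGroup V]

/-- The mean of `F (±w₁ ± ⋯ ± wₙ)` over all `2ⁿ` choices of signs, as a linear functional of
`F`. -/
def signMean : List V → (V → ℝ) →ₗ[ℝ] ℝ
  | [] => LinearMap.proj 0
  | w :: l => (2⁻¹ : ℝ) • (signMean l ∘ₗ LinearMap.funLeft ℝ ℝ (w + ·) +
      signMean l ∘ₗ LinearMap.funLeft ℝ ℝ (-w + ·))

lemma signMean_nil (F : V → ℝ) : signMean [] F = F 0 := rfl

lemma signMean_cons (w : V) (l : List V) (F : V → ℝ) :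
    signMean (w :: l) F =
      (signMean l (fun x => F (w + x)) + signMean l (fun x => F (-w + x))) / 2 :=
  (div_eq_inv_mul _ _).symm

lemma exists_signMean_le (l : List V) (F : V → ℝ) : ∃ x, signMean l F ≤ F x := by
  induction l generalizing F with
  | nil => exact ⟨0, le_rfl⟩
  | cons w l ih =>
    obtain ⟨x, hx⟩ := ih fun x => F (w + x)
    obtain ⟨y, hy⟩ := ih fun x => F (-w + x)
    rw [signMean_cons]
    rcases le_total (F (w + x)) (F (-w + y)) with h | h
    · exact ⟨-w + y, by linarith⟩
    · exact ⟨w + x, by linarith⟩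

variable {E : Type*} [NormedAddCommGroup E] [InnerProductSpace ℂ E]

lemma norm_add_sq_add_norm_sub_sq (x y : E) :
    ‖x + y‖ ^ 2 + ‖x - y‖ ^ 2 = 2 * (‖x‖ ^ 2 + ‖y‖ ^ 2) := by
  simpa only [sq] using parallelogram_law_with_norm ℂ x y

lemma signMean_norm_const_add_sq (f : V →+ E) (l : List V) (c : E) :
    signMean l (fun x => ‖c + f x‖ ^ 2) = ‖c‖ ^ 2 + (l.map fun w => ‖f w‖ ^ 2).sum := by
  induction l generalizing c with
  | nil => simp [signMean_nil]
  | cons w l ih =>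
    simp only [signMean_cons, map_add, map_neg, ← add_assoc, ih, List.map_cons, List.sum_cons,
      ← sub_eq_add_neg]
    linarith [norm_add_sq_add_norm_sub_sq c (f w)]

lemma signMean_norm_sq (f : V →+ E) (l : List V) :
    signMean l (fun x => ‖f x‖ ^ 2) = (l.map fun w => ‖f w‖ ^ 2).sum := by
  simpa using signMean_norm_const_add_sq f l 0

lemma signMean_toList_norm_sq {ι : Type*} [Fintype ι] (f : V →+ E) (w : ι → V) :
    signMean (Finset.univ.toList.map w) (fun x => ‖f x‖ ^ 2) = ∑ i, ‖f (w i)‖ ^ 2 := by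
  rw [signMean_norm_sq, List.map_map, Finset.sum_map_toList]
  rfl

/- Averaging over the sign of `w` separates the part `c + B w w + B x x` even in `w` from the odd
part `B w x + B x w`. -/
lemma signMean_cons_norm_const_add_sq (B : V →+ V →+ E) (w : V) (l : List V) (c : E) :
    signMean (w :: l) (fun x => ‖c + B x x‖ ^ 2) =
      signMean l (fun x => ‖c + B w w + B x x‖ ^ 2) +
        (l.map fun x => ‖(B w + B.flip w) x‖ ^ 2).sum := by
  rw [← signMean_norm_sq, signMean_cons, ← map_add, ← map_add, div_eq_iff two_ne_zero, mul_comm,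
    ← smul_eq_mul, ← map_smul]
  congr 1
  funext x
  simp only [Pi.add_apply, Pi.smul_apply, smul_eq_mul]
  rw [← norm_add_sq_add_norm_sub_sq]
  congr 3 <;> simp only [map_add, map_neg, AddMonoidHom.add_apply, AddMonoidHom.neg_apply,
    AddMonoidHom.flip_apply] <;> abel

lemma signMean_norm_const_add_diagonal_sq_le (B : V →+ V →+ E) (l : List V) (c : E) :
    signMean l (fun x => ‖c + B x x‖ ^ 2) ≤ ‖c + (l.map fun w => B w w).sum‖ ^ 2 +
      2 * (l.map fun w => (l.map fun w' => ‖B w w'‖ ^ 2).sum).sum := by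
  induction l generalizing c with
  | nil => simp [signMean_nil]
  | cons w l ih =>
    have odd_part : (l.map fun x => ‖(B w + B.flip w) x‖ ^ 2).sum ≤
        2 * ((l.map fun x => ‖B w x‖ ^ 2).sum + (l.map fun x => ‖B x w‖ ^ 2).sum) := by
      rw [← List.sum_map_add, ← List.sum_map_mul_left]
      refine List.sum_le_sum fun x _ => ?_
      rw [AddMonoidHom.add_apply, AddMonoidHom.flip_apply]
      linarith [norm_add_sq_add_norm_sub_sq (B w x) (B x w), sq_nonneg (‖B w x - B x w‖)]
    rw [signMean_cons_norm_const_add_sq]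
    simp only [List.map_cons, List.sum_cons, List.sum_map_add]
    rw [← add_assoc c]
    linarith [ih (c + B w w), sq_nonneg (‖B w w‖)]

end RandomSigns

/-- A finite family that is a contraction both as a column and as a row. -/
structure IsBicontraction {A ι : Type*} [CStarAlgebra A] [PartialOrder A] [Fintype ι]
    (w : ι → A) : Prop where
  sum_star_mul_self_le : ∑ i, star (w i) * w i ≤ 1
  sum_mul_star_self_le : ∑ i, w i * star (w i) ≤ 1

namespace IsBicontraction

variable {A ι κ : Type*} [CStarAlgebra A] [PartialOrder A] [Fintype ι] [Fintype κ]
  {p : ι → A} {q : κ → A}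

protected lemma star (hp : IsBicontraction p) : IsBicontraction fun i => star (p i) where
  sum_star_mul_self_le := by simpa only [star_star] using hp.sum_mul_star_self_le
  sum_mul_star_self_le := by simpa only [star_star] using hp.sum_star_mul_self_le

variable [StarOrderedRing A]

lemma sum_star_mul_self_le_of_mul (hp : ∑ i, star (p i) * p i ≤ 1)
    (hq : ∑ j, star (q j) * q j ≤ 1) :
    ∑ z : ι × κ, star (p z.1 * q z.2) * (p z.1 * q z.2) ≤ 1 := by
  rw [Fintype.sum_prod_type_right]
  refine (Finset.sum_le_sum fun j _ => ?_).trans hq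
  calc ∑ i, star (p i * q j) * (p i * q j) = star (q j) * (∑ i, star (p i) * p i) * q j := by
        simp only [star_mul, Finset.mul_sum, Finset.sum_mul, mul_assoc]
    _ ≤ star (q j) * 1 * q j := star_left_conjugate_le_conjugate hp _
    _ = star (q j) * q j := by rw [mul_one]

protected lemma mul (hp : IsBicontraction p) (hq : IsBicontraction q) :
    IsBicontraction fun z : ι × κ => p z.1 * q z.2 where
  sum_star_mul_self_le :=
    sum_star_mul_self_le_of_mul hp.sum_star_mul_self_le hq.sum_star_mul_self_le
  sum_mul_star_self_le := by
    have := sum_star_mul_self_le_of_mul hq.star.sum_star_mul_self_le hp.star.sum_star_mul_self_le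
    rw [Fintype.sum_prod_type_right] at this
    rw [Fintype.sum_prod_type]
    simpa only [star_mul, star_star] using this

end IsBicontraction

lemma isBicontraction_const_unit {A : Type*} [CStarAlgebra A] [PartialOrder A] [StarOrderedRing A]
    {c : A} (hc : ‖c‖ ≤ 1) : IsBicontraction fun _ : Unit => c where
  sum_star_mul_self_le := by simpa using star_mul_self_le_one_iff.2 hc
  sum_mul_star_self_le := by simpa using mul_star_self_le_one_iff.2 hc

namespace StarBimodule

open MulOpposite

variable {A E : Type*} [CStarAlgebra A] [PartialOrder A] [NormedAddCommGroup E]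
  [InnerProductSpace ℂ E] [CompleteSpace E] (b : StarBimodule A E)

/-- A bicontraction whose elements and their adjoints intertwine `ξ` and `η` up to `D` in total
squared defect. -/
structure IntertwiningFamily {ι : Type*} [Fintype ι] (D : ℝ) (w : ι → A) (ξ η : E) : Prop
    extends IsBicontraction w where
  sum_norm_defect_sq_le : ∑ i, ‖b.defect ξ η (w i)‖ ^ 2 ≤ D
  sum_norm_defect_star_sq_le : ∑ i, ‖b.defect η ξ (star (w i))‖ ^ 2 ≤ D

variable {b} {ι κ : Type*} [Fintype ι] [Fintype κ]

namespace IntertwiningFamily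

variable {w : ι → A} {p : ι → A} {q : κ → A} {ξ η ζ : E} {D D₁ D₂ : ℝ}

protected lemma star (h : b.IntertwiningFamily D w ξ η) :
    b.IntertwiningFamily D (fun i => star (w i)) η ξ where
  toIsBicontraction := h.toIsBicontraction.star
  sum_norm_defect_sq_le := h.sum_norm_defect_star_sq_le
  sum_norm_defect_star_sq_le := by simpa only [star_star] using h.sum_norm_defect_sq_le

protected lemma mono (h : b.IntertwiningFamily D₁ w ξ η) (hD : D₁ ≤ D₂) :
    b.IntertwiningFamily D₂ w ξ η :=
  ⟨h.toIsBicontraction, h.sum_norm_defect_sq_le.trans hD, h.sum_norm_defect_star_sq_le.trans hD⟩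

variable [StarOrderedRing A]

lemma sum_norm_defect_mul_sq_le (hp : b.IntertwiningFamily D₁ p η ζ)
    (hq : b.IntertwiningFamily D₂ q ξ η) :
    ∑ z : ι × κ, ‖b.defect ξ ζ (p z.1 * q z.2)‖ ^ 2 ≤ 2 * (D₁ + D₂) := by
  have left_part : ∑ z : ι × κ, ‖b.left (p z.1) (b.defect ξ η (q z.2))‖ ^ 2 ≤ D₂ := by
    rw [Fintype.sum_prod_type_right]
    exact (Finset.sum_le_sum fun j _ => b.sum_norm_left_sq_le hp.sum_star_mul_self_le
      (b.defect ξ η (q j))).trans hq.sum_norm_defect_sq_le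
  have right_part : ∑ z : ι × κ, ‖b.right (q z.2) (b.defect η ζ (p z.1))‖ ^ 2 ≤ D₁ := by
    rw [Fintype.sum_prod_type]
    exact (Finset.sum_le_sum fun i _ => b.sum_norm_right_sq_le hq.sum_mul_star_self_le
      (b.defect η ζ (p i))).trans hp.sum_norm_defect_sq_le
  calc ∑ z : ι × κ, ‖b.defect ξ ζ (p z.1 * q z.2)‖ ^ 2
      ≤ ∑ z : ι × κ, 2 * (‖b.left (p z.1) (b.defect ξ η (q z.2))‖ ^ 2 +
          ‖b.right (q z.2) (b.defect η ζ (p z.1))‖ ^ 2) := Finset.sum_le_sum fun z _ => by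
        rw [b.defect_mul ξ η ζ]
        exact (pow_le_pow_left₀ (norm_nonneg _) (norm_add_le _ _) 2).trans add_sq_le
    _ ≤ 2 * (D₁ + D₂) := by
        rw [← Finset.mul_sum, Finset.sum_add_distrib]
        linarith

protected lemma mul (hp : b.IntertwiningFamily D₁ p η ζ) (hq : b.IntertwiningFamily D₂ q ξ η) :
    b.IntertwiningFamily (2 * (D₁ + D₂)) (fun z : ι × κ => p z.1 * q z.2) ξ ζ where
  toIsBicontraction := hp.toIsBicontraction.mul hq.toIsBicontraction
  sum_norm_defect_sq_le := sum_norm_defect_mul_sq_le hp hq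
  sum_norm_defect_star_sq_le := by
    have := sum_norm_defect_mul_sq_le hq.star hp.star
    rw [Fintype.sum_prod_type_right] at this
    rw [Fintype.sum_prod_type, add_comm D₁]
    simpa only [star_mul] using this

end IntertwiningFamily

lemma AlmostIntertwines.intertwiningFamily [StarOrderedRing A] {c : A} {ξ η : E} {τ : ℝ}
    (h : b.AlmostIntertwines τ c ξ η) (hc : ‖c‖ ≤ 1) :
    b.IntertwiningFamily (τ ^ 2) (fun _ : Unit => c) ξ η where
  toIsBicontraction := isBicontraction_const_unit hc
  sum_norm_defect_sq_le := by simpa using pow_le_pow_left₀ (norm_nonneg _) h.1 2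
  sum_norm_defect_star_sq_le := by simpa using pow_le_pow_left₀ (norm_nonneg _) h.2 2

section Randomization

variable [StarOrderedRing A]

lemma signMean_norm_left_mul_star_sq_le (b : StarBimodule A E) {w : ι → A}
    (hw : IsBicontraction w) (ζ : E) :
    signMean (Finset.univ.toList.map w) (fun x => ‖b.left (x * star x) ζ‖ ^ 2) ≤ 3 * ‖ζ‖ ^ 2 := by
  let B : A →+ A →+ E := AddMonoidHom.mk'
    (fun x => AddMonoidHom.mk' (fun y => b.left (x * star y) ζ) fun y z => by simp [mul_add])
    fun x y => by ext z; simp [add_mul]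
  have B_apply (x y : A) : B x y = b.left (x * star y) ζ := rfl
  have diagonal : ‖∑ i, B (w i) (w i)‖ ≤ ‖ζ‖ := by
    simp only [B_apply, ← sum_apply, ← map_sum]
    refine b.norm_left_le_of_norm_le_one ?_ ζ
    exact (CStarAlgebra.norm_le_one_iff_of_nonneg _
      (Finset.sum_nonneg fun i _ => mul_star_self_nonneg _)).2 hw.sum_mul_star_self_le
  have off_diagonal : ∑ i, ∑ j, ‖B (w i) (w j)‖ ^ 2 ≤ ‖ζ‖ ^ 2 := by
    rw [Finset.sum_comm]
    calc ∑ j, ∑ i, ‖B (w i) (w j)‖ ^ 2 ≤ ∑ j, ‖b.left (star (w j)) ζ‖ ^ 2 := by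
          simp only [B_apply, left_mul_apply]
          exact Finset.sum_le_sum fun j _ => b.sum_norm_left_sq_le hw.sum_star_mul_self_le _
      _ ≤ ‖ζ‖ ^ 2 := b.sum_norm_left_sq_le hw.star.sum_star_mul_self_le ζ
  have mean_le := signMean_norm_const_add_diagonal_sq_le B (Finset.univ.toList.map w) 0
  simp only [zero_add, List.map_map, Function.comp_def, Finset.sum_map_toList] at mean_le
  refine mean_le.trans ?_
  linarith [pow_le_pow_left₀ (norm_nonneg _) diagonal 2]

/- The penalties for `‖x x* ζ‖²` and for the squared defects have mean at most `γ / 4` each. -/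
lemma IntertwiningFamily.exists_le_sub_penalty {w : ι → A} {ξ η ζ : E} {r : A} {γ e : ℝ}
    (h : b.IntertwiningFamily ((e * γ) ^ 2 / 400) w ξ η) (hζ : ‖ζ‖ ≤ 1) (hγ : 0 < γ) (he : 0 < e)
    (mass : γ ≤ ∑ i, ‖b.left r (b.left (star (w i)) ζ)‖ ^ 2) :
    ∃ x : A, γ / 2 ≤ ‖b.left r (b.left (star x) ζ)‖ ^ 2 - γ / 12 * ‖b.left (x * star x) ζ‖ ^ 2 -
      50 / (e ^ 2 * γ) * (‖b.defect ξ η x‖ ^ 2 + ‖b.defect η ξ (star x)‖ ^ 2) := by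
  let gain : A →+ E :=
    AddMonoidHom.mk' (fun x => b.left r (b.left (star x) ζ)) fun x y => by simp
  let defectStar : A →+ E := AddMonoidHom.mk' (fun x => b.defect η ξ (star x)) fun x y => by simp
  obtain ⟨x, hx⟩ := exists_signMean_le (Finset.univ.toList.map w) <|
    (fun x => ‖gain x‖ ^ 2) - (γ / 12) • (fun x => ‖b.left (x * star x) ζ‖ ^ 2) -
      (50 / (e ^ 2 * γ)) • ((fun x => ‖(b.defect ξ η).toAddMonoidHom x‖ ^ 2) +
        fun x => ‖defectStar x‖ ^ 2)
  refine ⟨x, le_trans ?_ hx⟩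
  rw [map_sub, map_sub, map_smul, map_smul, map_add, signMean_toList_norm_sq,
    signMean_toList_norm_sq, signMean_toList_norm_sq, smul_eq_mul, smul_eq_mul]
  have square_mean : γ / 12 *
      signMean (Finset.univ.toList.map w) (fun x => ‖b.left (x * star x) ζ‖ ^ 2) ≤ γ / 4 := by
    have := signMean_norm_left_mul_star_sq_le b h.toIsBicontraction ζ
    nlinarith [pow_le_one₀ (n := 2) (norm_nonneg ζ) hζ]
  have defect_mean : 50 / (e ^ 2 * γ) * (∑ i, ‖b.defect ξ η (w i)‖ ^ 2 +
      ∑ i, ‖b.defect η ξ (star (w i))‖ ^ 2) ≤ γ / 4 := by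
    calc _ ≤ 50 / (e ^ 2 * γ) * ((e * γ) ^ 2 / 400 + (e * γ) ^ 2 / 400) := by
          gcongr
          exacts [h.sum_norm_defect_sq_le, h.sum_norm_defect_star_sq_le]
      _ = γ / 4 := by field_simp; norm_num
  have gain_mean : γ ≤ ∑ i, ‖gain (w i)‖ ^ 2 := mass
  change _ ≤ _ - _ - 50 / (e ^ 2 * γ) * (∑ i, ‖b.defect ξ η (w i)‖ ^ 2 +
      ∑ i, ‖b.defect η ξ (star (w i))‖ ^ 2)
  linarith

lemma IntertwiningFamily.exists_signed_sum {w : ι → A} {ξ η ζ : E} {r : A} {γ e : ℝ}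
    (h : b.IntertwiningFamily ((e * γ) ^ 2 / 400) w ξ η) (hζ : ‖ζ‖ ≤ 1) (hr : ‖r‖ ≤ 1)
    (hγ : 0 < γ) (he : 0 < e) (mass : γ ≤ ∑ i, ‖b.left r (b.left (star (w i)) ζ)‖ ^ 2) :
    ∃ x : A, γ / 2 ≤ ‖b.left r (b.left (star x) ζ)‖ ^ 2 ∧
      ‖b.left (x * star x) ζ‖ ≤ 12 / γ ∧ b.AlmostIntertwines (e / 2) x ξ η := by
  obtain ⟨x, hx⟩ := h.exists_le_sub_penalty hζ hγ he mass
  have gain_le := b.norm_left_left_star_sq_le hr x hζ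
  set q := ‖b.left (x * star x) ζ‖
  set D := ‖b.defect ξ η x‖ ^ 2 + ‖b.defect η ξ (star x)‖ ^ 2
  have D_nonneg : 0 ≤ 50 / (e ^ 2 * γ) * D := by positivity
  have q_nonneg : 0 ≤ γ / 12 * q ^ 2 := by positivity
  have q_le : q ≤ 12 / γ := by
    rw [le_div_iff₀ hγ]
    nlinarith
  have D_le : D ≤ (e / 2) ^ 2 := by
    have : 50 / (e ^ 2 * γ) * D ≤ 12 / γ := by linarith
    rw [div_mul_eq_mul_div, div_le_div_iff₀ (by positivity) hγ] at this
    have := le_of_mul_le_mul_right (show 50 * D * γ ≤ 12 * e ^ 2 * γ by linarith) hγ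
    linarith [sq_nonneg e]
  have sq_le := sq_nonneg (‖b.defect ξ η x‖)
  have sq_star_le := sq_nonneg (‖b.defect η ξ (star x)‖)
  have e_nonneg : 0 ≤ e / 2 := by positivity
  exact ⟨x, by linarith, q_le, (sq_le_sq₀ (norm_nonneg _) e_nonneg).1 (by linarith),
    (sq_le_sq₀ (norm_nonneg _) e_nonneg).1 (by linarith)⟩

lemma norm_smul_left_star_sub_boundedTransform_le (b : StarBimodule A E) (t : ℝ) (x : A) (ζ : E) :
    ‖(t : ℂ) • b.left (star x) ζ - b.left (star (boundedTransform ((t : ℂ) • x))) ζ‖ ≤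
      t ^ 2 * ‖b.left (x * star x) ζ‖ := by
  have star_smul_real : star ((t : ℂ) • x) = (t : ℂ) • star x := by simp [star_smul]
  have := b.norm_left_sub_boundedTransform_le (star ((t : ℂ) • x)) ζ
  rw [star_star, ← star_boundedTransform, star_smul_real, smul_mul_smul_comm, map_smul, map_smul,
    smul_apply, smul_apply, norm_smul, norm_mul, Complex.norm_real, ← sq, Real.norm_eq_abs,
    sq_abs] at this
  exact this

/- The truncation of a small multiple `t x` of a signed sum keeps half of its mass, as the error
is quadratic in `t`. -/
lemma IntertwiningFamily.exists_contraction {w : ι → A} {ξ η ζ : E} {r : A} {γ e : ℝ}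
    (h : b.IntertwiningFamily ((e * γ) ^ 2 / 400) w ξ η) (hζ : ‖ζ‖ ≤ 1) (hr : ‖r‖ ≤ 1)
    (hγ : 0 < γ) (hγ_le : γ ≤ 1) (he : 0 < e)
    (mass : γ ≤ ∑ i, ‖b.left r (b.left (star (w i)) ζ)‖ ^ 2) :
    ∃ Y : A, ‖Y‖ ≤ 1 ∧ γ ^ 5 / 18432 ≤ ‖b.left r (b.left (star Y) ζ)‖ ^ 2 ∧
      b.AlmostIntertwines e Y ξ η := by
  obtain ⟨x, x_mass, x_sq_le, hx⟩ := h.exists_signed_sum hζ hr hγ he mass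
  obtain ⟨t, ht⟩ : ∃ t, t = γ ^ 2 / 48 := ⟨_, rfl⟩
  have t_nonneg : 0 ≤ t := by rw [ht]; positivity
  have t_le : t ≤ 1 := by nlinarith
  have t_norm : ‖(t : ℂ)‖ = t := Complex.norm_of_nonneg t_nonneg
  set Y := boundedTransform ((t : ℂ) • x)
  have error_le : t * ‖b.left r (b.left (star x) ζ)‖ - ‖b.left r (b.left (star Y) ζ)‖ ≤
      t * (γ / 4) :=
    calc t * ‖b.left r (b.left (star x) ζ)‖ - ‖b.left r (b.left (star Y) ζ)‖
        ≤ ‖b.left r ((t : ℂ) • b.left (star x) ζ - b.left (star Y) ζ)‖ := by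
          rw [map_sub, map_smul]
          simpa only [norm_smul, t_norm] using norm_sub_norm_le
            ((t : ℂ) • b.left r (b.left (star x) ζ)) (b.left r (b.left (star Y) ζ))
      _ ≤ t ^ 2 * ‖b.left (x * star x) ζ‖ := (b.norm_left_le_of_norm_le_one hr _).trans
          (b.norm_smul_left_star_sub_boundedTransform_le t x ζ)
      _ ≤ t ^ 2 * (12 / γ) := by gcongr
      _ = t * (γ / 4) := by rw [ht]; field_simp; norm_num
  refine ⟨Y, norm_boundedTransform_le_one _, ?_, ?_⟩
  · set P := ‖b.left r (b.left (star x) ζ)‖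
    have P_ge : γ / 2 ≤ P := by nlinarith [norm_nonneg (b.left r (b.left (star x) ζ))]
    calc γ ^ 5 / 18432 = t ^ 2 / 4 * (γ / 2) := by rw [ht]; ring
      _ ≤ t ^ 2 / 4 * P ^ 2 := by gcongr
      _ = (t * P / 2) ^ 2 := by ring
      _ ≤ ‖b.left r (b.left (star Y) ζ)‖ ^ 2 := by
        gcongr
        linarith [mul_le_mul_of_nonneg_left P_ge t_nonneg]
  · have := (hx.smul (t : ℂ)).boundedTransform
    refine this.mono ?_
    rw [t_norm]
    nlinarith

end Randomization

end StarBimodule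

/-! ### Transfer maps and walks -/

section Transfer

variable {A ι κ : Type*} [CStarAlgebra A] [Fintype ι] [Fintype κ]

/-- The completely positive map `y ↦ ∑ᵢ aᵢ y aᵢ*` of a finite family. -/
def transfer (a : ι → A) : Module.End ℂ A := ∑ i, LinearMap.mulLeftRight ℂ (a i, star (a i))

lemma transfer_apply (a : ι → A) (y : A) : transfer a y = ∑ i, a i * y * star (a i) := by
  simp [transfer]

lemma transfer_const_unit_apply (c y : A) :
    transfer (fun _ : Unit => c) y = c * y * star c := by
  simp [transfer_apply]

lemma transfer_mul (p : ι → A) (q : κ → A) :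
    transfer (fun z : ι × κ => p z.1 * q z.2) = transfer p * transfer q := by
  ext y
  simp only [Module.End.mul_apply, transfer_apply, Fintype.sum_prod_type, Finset.mul_sum,
    Finset.sum_mul, star_mul, mul_assoc]

/-- One step `y ↦ v* (∑ᵢ aᵢ y aᵢ*) v` of the walk generated by a family `a` and an element `v`. -/
def walk (a : ι → A) (v : A) : Module.End ℂ A := transfer (fun _ : Unit => star v) * transfer a

lemma walk_apply (a : ι → A) (v y : A) : walk a v y = star v * transfer a y * v := by
  rw [walk, Module.End.mul_apply, transfer_const_unit_apply, star_star]

lemma walk_pow_succ_apply (a : ι → A) (v y : A) (n : ℕ) :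
    (walk a v ^ (n + 1)) y = star v * transfer a ((walk a v ^ n) y) * v := by
  rw [pow_succ', Module.End.mul_apply, walk_apply]

variable [PartialOrder A] [StarOrderedRing A] {a : ι → A} {v x y : A}

lemma transfer_mono (a : ι → A) (hxy : x ≤ y) : transfer a x ≤ transfer a y := by
  rw [transfer_apply, transfer_apply]
  exact Finset.sum_le_sum fun i _ => star_right_conjugate_le_conjugate hxy (a i)

lemma transfer_nonneg (a : ι → A) (hx : 0 ≤ x) : 0 ≤ transfer a x := by
  simpa using transfer_mono a hx

lemma transfer_le_one (ha : ∑ i, a i * star (a i) ≤ 1) (hx : x ≤ 1) : transfer a x ≤ 1 :=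
  (transfer_mono a hx).trans (by simpa [transfer_apply] using ha)

lemma walk_pow_nonneg (a : ι → A) (v : A) (hx : 0 ≤ x) (n : ℕ) : 0 ≤ (walk a v ^ n) x := by
  induction n with
  | zero => simpa using hx
  | succ n ih =>
    rw [walk_pow_succ_apply]
    exact star_left_conjugate_nonneg (transfer_nonneg a ih) v

/- By induction, `x + v* T(∑ᵢ (walk ^ i) x) v ≤ (1 - v* v) + v* v`. -/
lemma sum_walk_pow_le_one (ha : ∑ i, a i * star (a i) ≤ 1) (hx : x ≤ 1 - star v * v) (m : ℕ) :
    ∑ n ∈ Finset.range m, (walk a v ^ n) x ≤ 1 := by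
  induction m with
  | zero => simp
  | succ m ih =>
    calc ∑ n ∈ Finset.range (m + 1), (walk a v ^ n) x
        = star v * transfer a (∑ n ∈ Finset.range m, (walk a v ^ n) x) * v + x := by
          rw [Finset.sum_range_succ', pow_zero, Module.End.one_apply, ← walk_apply, map_sum]
          simp only [pow_succ', Module.End.mul_apply]
      _ ≤ star v * 1 * v + (1 - star v * v) :=
          add_le_add (star_left_conjugate_le_conjugate (transfer_le_one ha ih) v) hx
      _ = 1 := by rw [mul_one]; abel

lemma walk_pow_le_one (ha : ∑ i, a i * star (a i) ≤ 1) (hx_nonneg : 0 ≤ x)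
    (hx : x ≤ 1 - star v * v) (n : ℕ) : (walk a v ^ n) x ≤ 1 :=
  (Finset.single_le_sum (f := fun n => (walk a v ^ n) x)
    (fun i _ => walk_pow_nonneg a v hx_nonneg i) (Finset.self_mem_range_succ n)).trans
    (sum_walk_pow_le_one ha hx (n + 1))

end Transfer

lemma norm_sq_sub_two_mul_le_norm_sq {F : Type*} [SeminormedAddCommGroup F] {x y : F} {τ : ℝ}
    (hy : ‖y‖ ≤ 1) (hxy : ‖y - x‖ ≤ τ) : ‖y‖ ^ 2 - 2 * τ ≤ ‖x‖ ^ 2 := by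
  have norm_le : ‖y‖ ≤ ‖x‖ + τ := (norm_le_norm_add_norm_sub' y x).trans (by gcongr)
  nlinarith [norm_nonneg x, norm_nonneg y, (norm_nonneg _).trans hxy, sq_nonneg (‖y‖ - ‖x‖)]

namespace StarBimodule

variable {A E : Type*} [CStarAlgebra A] [NormedAddCommGroup E] [InnerProductSpace ℂ E]
  [CompleteSpace E] {b : StarBimodule A E}

lemma re_inner_left_transfer {ι : Type*} [Fintype ι] (w : ι → A) (r : A) (ζ : E) :
    (inner ℂ (b.left (transfer w (star r * r)) ζ) ζ).re =
      ∑ i, ‖b.left r (b.left (star (w i)) ζ)‖ ^ 2 := by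
  simp only [← left_mul_apply, sum_norm_left_sq, transfer_apply, star_mul, star_star, mul_assoc]

variable [PartialOrder A]

/-- An intertwining family that in addition is nearly an isometric column when it acts on `ξ` from
the right. -/
structure IntertwiningSystem (b : StarBimodule A E) {ι : Type*} [Fintype ι] (τ : ℝ) (a : ι → A)
    (ξ η : E) : Prop extends b.IntertwiningFamily (τ ^ 2) a ξ η where
  norm_right_one_sub_le : ‖b.right (1 - ∑ i, star (a i) * a i) ξ‖ ≤ τ

variable {v x : A} {ξ η : E} {τ : ℝ}

lemma IntertwiningSystem.nonneg {ι : Type*} [Fintype ι] {a : ι → A}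
    (h : b.IntertwiningSystem τ a ξ η) : 0 ≤ τ :=
  (norm_nonneg _).trans h.norm_right_one_sub_le

lemma IntertwiningSystem.norm_sq_sub_le_sum {ι : Type*} [Fintype ι] {a : ι → A}
    (h : b.IntertwiningSystem τ a ξ η) (hξ : ‖ξ‖ = 1) {c : A} (hc : ‖c‖ ≤ 1) :
    ‖b.left c ξ‖ ^ 2 - τ ≤ ∑ i, ‖b.right (star (a i)) (b.left c ξ)‖ ^ 2 := by
  have loss_le : ‖b.right (1 - ∑ i, star (a i) * a i) (b.left c ξ)‖ ≤ τ := by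
    rw [← left_right_comm]
    exact (b.norm_left_le_of_norm_le_one hc _).trans h.norm_right_one_sub_le
  have c_norm_le : ‖b.left c ξ‖ ≤ 1 := hξ ▸ b.norm_left_le_of_norm_le_one hc ξ
  have loss_inner_le := (re_inner_le_norm (𝕜 := ℂ) _ _).trans
    ((mul_le_of_le_one_right (norm_nonneg _) c_norm_le).trans loss_le)
  rw [map_sub, sub_apply, right_one_apply, inner_sub_left, map_sub, inner_self_eq_norm_sq]
    at loss_inner_le
  simp only [sum_norm_right_sq, star_star]
  exact sub_le_comm.1 loss_inner_le

variable [StarOrderedRing A]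

section Step

variable {ι : Type*} [Fintype ι] {a : ι → A}

lemma IntertwiningSystem.le_re_inner_left_transfer (h : b.IntertwiningSystem τ a ξ η)
    (hξ : ‖ξ‖ = 1) (hx_nonneg : 0 ≤ x) (hx : x ≤ 1) :
    (inner ℂ (b.left x ξ) ξ).re - 3 * τ ≤ (inner ℂ (b.left (transfer a x) η) η).re := by
  obtain ⟨c, rfl⟩ := CStarAlgebra.nonneg_iff_eq_star_mul_self.1 hx_nonneg
  have hc : ‖c‖ ≤ 1 := star_mul_self_le_one_iff.1 hx
  let P : PiLp 2 fun _ : ι => E := WithLp.toLp 2 fun i => b.left c (b.left (star (a i)) η)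
  let Q : PiLp 2 fun _ : ι => E := WithLp.toLp 2 fun i => b.left c (b.right (star (a i)) ξ)
  have P_sq : ‖P‖ ^ 2 = (inner ℂ (b.left (transfer a (star c * c)) η) η).re := by
    rw [re_inner_left_transfer, PiLp.norm_sq_eq_of_L2]
  have Q_sq : ‖Q‖ ^ 2 = ∑ i, ‖b.right (star (a i)) (b.left c ξ)‖ ^ 2 := by
    simp only [PiLp.norm_sq_eq_of_L2, Q, left_right_comm]
  have Q_le : ‖Q‖ ≤ 1 := by
    rw [← sq_le_one_iff₀ (norm_nonneg _), Q_sq]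
    exact (b.sum_norm_right_sq_le h.star.sum_mul_star_self_le _).trans
      (pow_le_one₀ (norm_nonneg _) (hξ ▸ b.norm_left_le_of_norm_le_one hc ξ))
  have Q_sub_P_le : ‖Q - P‖ ≤ τ := by
    rw [norm_sub_rev, ← sq_le_sq₀ (norm_nonneg _) h.nonneg, PiLp.norm_sq_eq_of_L2]
    refine le_trans (Finset.sum_le_sum fun i _ => ?_) h.sum_norm_defect_star_sq_le
    gcongr
    rw [PiLp.sub_apply, ← map_sub, ← defect_apply]
    exact b.norm_left_le_of_norm_le_one hc _
  rw [← norm_left_sq, ← P_sq]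
  linarith [norm_sq_sub_two_mul_le_norm_sq Q_le Q_sub_P_le, h.norm_sq_sub_le_sum hξ hc]

lemma AlmostIntertwines.le_re_inner_left_star_conjugate {y : A} {g : ℝ}
    (h : b.AlmostIntertwines τ v ξ η) (hv : ‖v‖ ≤ 1) (hη : ‖η‖ = 1) (hy_nonneg : 0 ≤ y)
    (hy : y ≤ 1) (hg : 0 ≤ g)
    (mass : (inner ℂ (b.left y (b.left (1 - v * star v) η)) (b.left (1 - v * star v) η)).re ≤
      g ^ 2) :
    (inner ℂ (b.left y η) η).re - (g + 4 * τ) ≤ (inner ℂ (b.left (star v * y * v) ξ) ξ).re := by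
  obtain ⟨c, rfl⟩ := CStarAlgebra.nonneg_iff_eq_star_mul_self.1 hy_nonneg
  have hc : ‖c‖ ≤ 1 := star_mul_self_le_one_iff.1 hy
  have right_loss_le : ‖b.left c (b.right (1 - v * star v) η)‖ ≤ g + (τ + τ) := by
    have left_loss_le : ‖b.left c (b.left (1 - v * star v) η)‖ ≤ g := by
      rwa [← norm_left_sq, sq_le_sq₀ (norm_nonneg _) hg] at mass
    rw [← sub_sub_cancel (b.left (1 - v * star v) η) (b.right (1 - v * star v) η), map_sub]
    exact norm_sub_le_of_le left_loss_le ((b.norm_left_le_of_norm_le_one hc _).trans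
      (h.one_sub_mul_star hv).norm_defect_le)
  have c_norm_le : ‖b.left c η‖ ≤ 1 := hη ▸ b.norm_left_le_of_norm_le_one hc η
  have right_mass : ‖b.left c η‖ ^ 2 - (g + (τ + τ)) ≤ ‖b.left c (b.right v η)‖ ^ 2 := by
    have := (re_inner_le_norm (𝕜 := ℂ) _ _).trans
      ((mul_le_of_le_one_right (norm_nonneg _) c_norm_le).trans right_loss_le)
    rw [left_right_comm, map_sub, sub_apply, right_one_apply, inner_sub_left, map_sub,
      inner_self_eq_norm_sq] at this
    rw [left_right_comm, norm_right_sq]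
    exact sub_le_comm.1 this
  have right_norm_le : ‖b.left c (b.right v η)‖ ≤ 1 :=
    (b.norm_left_le_of_norm_le_one hc _).trans (hη ▸ b.norm_right_le_of_norm_le_one hv η)
  have deviation : ‖b.left c (b.right v η) - b.left c (b.left v ξ)‖ ≤ τ := by
    rw [norm_sub_rev, ← map_sub, ← defect_apply]
    exact (b.norm_left_le_of_norm_le_one hc _).trans h.norm_defect_le
  have conjugate_sq : ‖b.left c (b.left v ξ)‖ ^ 2 =
      (inner ℂ (b.left (star v * (star c * c) * v) ξ) ξ).re := by
    rw [← left_mul_apply, norm_left_sq, star_mul]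
    simp only [mul_assoc]
  rw [← norm_left_sq, ← conjugate_sq]
  linarith [norm_sq_sub_two_mul_le_norm_sq right_norm_le deviation]

end Step

section Walk

variable {ι : Type} [Fintype ι] {a : ι → A}

/- Otherwise each of the first `m` elements of the walk keeps mass at least `β / 2` at `ξ`, while
these elements sum to at most `1`. -/
lemma IntertwiningSystem.exists_lt_re_inner_left_walk {β g : ℝ} {m : ℕ}
    (h : b.IntertwiningSystem τ a ξ η) (hv : b.AlmostIntertwines τ v ξ η) (hv_norm : ‖v‖ ≤ 1)
    (hξ : ‖ξ‖ = 1) (hη : ‖η‖ = 1) (hx_nonneg : 0 ≤ x) (hx : x ≤ 1 - star v * v)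
    (mass : β ≤ (inner ℂ (b.left x ξ) ξ).re) (hg : 0 ≤ g) (hm : 2 < m * β)
    (hgm : m * (g + 7 * τ) ≤ β / 2) :
    ∃ i < m, g ^ 2 < (inner ℂ (b.left (transfer a ((walk a v ^ i) x)) (b.left (1 - v * star v) η))
      (b.left (1 - v * star v) η)).re := by
  by_contra! small
  have decay : ∀ i ≤ m, β - i * (g + 7 * τ) ≤ (inner ℂ (b.left ((walk a v ^ i) x) ξ) ξ).re := by
    intro i hi
    induction i with
    | zero => simpa using mass
    | succ i ih =>
      have y_nonneg := walk_pow_nonneg a v hx_nonneg i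
      have y_le := walk_pow_le_one h.sum_mul_star_self_le hx_nonneg hx i
      have transfer_step := h.le_re_inner_left_transfer hξ y_nonneg y_le
      have conjugate_step := hv.le_re_inner_left_star_conjugate hv_norm hη
        (transfer_nonneg a y_nonneg) (transfer_le_one h.sum_mul_star_self_le y_le) hg
        (small i (by lia))
      rw [walk_pow_succ_apply]
      push_cast
      linarith [ih (by lia)]
  have sum_le : ∑ i ∈ Finset.range m, (inner ℂ (b.left ((walk a v ^ i) x) ξ) ξ).re ≤ 1 := by
    have := b.re_inner_left_mono (sum_walk_pow_le_one h.sum_mul_star_self_le hx m) ξ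
    rw [left_one_apply, map_sum, sum_apply, sum_inner, Complex.re_sum] at this
    refine this.trans_eq ?_
    rw [← RCLike.re_eq_complex_re, inner_self_eq_norm_sq, hξ, one_pow]
  have le_sum : ∑ i ∈ Finset.range m, β / 2 ≤
      ∑ i ∈ Finset.range m, (inner ℂ (b.left ((walk a v ^ i) x) ξ) ξ).re := by
    refine Finset.sum_le_sum fun i hi => le_trans ?_ (decay i (Finset.mem_range.1 hi).le)
    have step_nonneg : 0 ≤ g + 7 * τ := by linarith [h.nonneg]
    have : (i : ℝ) * (g + 7 * τ) ≤ m * (g + 7 * τ) := by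
      gcongr
      exact (Finset.mem_range.1 hi).le
    linarith
  rw [Finset.sum_const, Finset.card_range, nsmul_eq_mul] at le_sum
  linarith

lemma IntertwiningFamily.exists_transfer_mul_walk_pow_eq (h : b.IntertwiningFamily (τ ^ 2) a ξ η)
    (hv : b.AlmostIntertwines τ v ξ η) (hv_norm : ‖v‖ ≤ 1) (i : ℕ) :
    ∃ (κ : Type) (_ : Fintype κ) (w : κ → A), b.IntertwiningFamily (10 ^ i * τ ^ 2) w ξ η ∧
      transfer a * walk a v ^ i = transfer w := by
  induction i with
  | zero => exact ⟨ι, inferInstance, a, by simpa using h, by simp⟩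
  | succ i ih =>
    obtain ⟨κ, _, w, hw, w_eq⟩ := ih
    have hv_star := hv.star.intertwiningFamily (by rwa [norm_star])
    refine ⟨(ι × Unit) × κ, inferInstance, _, ((h.mul hv_star).mul hw).mono ?_, ?_⟩
    · have : (1 : ℝ) ≤ 10 ^ i := one_le_pow₀ (by norm_num)
      rw [pow_succ' (10 : ℝ)]
      nlinarith [mul_le_mul_of_nonneg_right this (sq_nonneg τ)]
    · rw [transfer_mul (fun z : ι × Unit => a z.1 * star v) w,
        transfer_mul a fun _ : Unit => star v, ← w_eq, pow_succ']
      simp only [walk, mul_assoc]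

lemma IntertwiningSystem.exists_intertwiningFamily_mass_le {β : ℝ} {m : ℕ}
    (h : b.IntertwiningSystem τ a ξ η) (hv : b.AlmostIntertwines τ v ξ η) (hv_norm : ‖v‖ ≤ 1)
    (hξ : ‖ξ‖ = 1) (hη : ‖η‖ = 1) (hβ : 0 < β) (mass : β ≤ ‖b.left (1 - star v * v) ξ‖ ^ 2)
    (hm : 2 < m * β) (hτ : 7 * τ ≤ β / (4 * m)) :
    ∃ (κ : Type) (_ : Fintype κ) (w : κ → A), b.IntertwiningFamily (10 ^ m * τ ^ 2) w ξ η ∧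
      (β / (4 * m)) ^ 2 ≤ ∑ k, ‖b.left (1 - star v * v) (b.left (star (w k))
        (b.left (1 - v * star v) η))‖ ^ 2 := by
  set r := 1 - star v * v with r_def
  have r_star : star r = r := by simp [r_def]
  have r_sq_le : star r * r ≤ r := by
    rw [r_star]
    exact mul_self_le_self_of_nonneg_of_le_one
      (sub_nonneg.2 (star_mul_self_le_one_iff.2 hv_norm))
      (sub_le_self _ (star_mul_self_nonneg v))
  have m_pos : (0 : ℝ) < m := pos_of_mul_pos_left (two_pos.trans hm) hβ.le
  have hgm : m * (β / (4 * m) + 7 * τ) ≤ β / 2 :=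
    calc m * (β / (4 * m) + 7 * τ) ≤ m * (β / (4 * m) + β / (4 * m)) := by gcongr
      _ = β / 2 := by field_simp; norm_num
  rw [norm_left_sq] at mass
  obtain ⟨i, hi, hlt⟩ := h.exists_lt_re_inner_left_walk hv hv_norm hξ hη (star_mul_self_nonneg r)
    r_sq_le mass (by positivity) hm hgm
  obtain ⟨κ, _, w, hw, w_eq⟩ := h.exists_transfer_mul_walk_pow_eq hv hv_norm i
  refine ⟨κ, inferInstance, w, hw.mono ?_, ?_⟩
  · gcongr
    norm_num
  · rw [← re_inner_left_transfer, ← w_eq, Module.End.mul_apply]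
    exact hlt.le

end Walk

end StarBimodule

/-! ### Gaining mass -/

section MassGain

variable {A : Type*} [CStarAlgebra A]

lemma norm_mul_add_mul_le_one [PartialOrder A] [StarOrderedRing A] {p₁ p₂ q₁ q₂ : A}
    (hp : p₁ * star p₁ + p₂ * star p₂ ≤ 1) (hq : star q₁ * q₁ + star q₂ * q₂ ≤ 1) :
    ‖p₁ * q₁ + p₂ * q₂‖ ≤ 1 := by
  let pair (x y : A) : WithCStarModule A (A × A) := (WithCStarModule.equiv A (A × A)).symm (x, y)
  have norm_pair_le {x y : A} (hxy : x * star x + y * star y ≤ 1) : ‖pair x y‖ ≤ 1 := by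
    rw [WithCStarModule.prod_norm, Real.sqrt_le_one]
    refine (CStarAlgebra.norm_le_one_iff_of_nonneg _ ?_).2 ?_
    · simp only [WithCStarModule.inner_def]
      exact add_nonneg (mul_star_self_nonneg _) (mul_star_self_nonneg _)
    · simpa [pair, WithCStarModule.inner_def] using hxy
  have inner_pair : inner A (pair (star q₁) (star q₂)) (pair p₁ p₂) = p₁ * q₁ + p₂ * q₂ := by
    simp [pair, WithCStarModule.prod_inner, WithCStarModule.inner_def]
  rw [← inner_pair]
  exact (CStarModule.norm_inner_le (WithCStarModule A (A × A))).trans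
    (mul_le_one₀ (norm_pair_le (by simpa using hq)) (by positivity) (norm_pair_le hp))

lemma norm_one_sub_star_mul_self_le_one {v : A} (hv : ‖v‖ ≤ 1) : ‖1 - star v * v‖ ≤ 1 := by
  let _ := CStarAlgebra.spectralOrder A
  let _ := CStarAlgebra.spectralOrderedRing A
  exact (CStarAlgebra.norm_le_one_iff_of_nonneg _
    (sub_nonneg.2 (star_mul_self_le_one_iff.2 hv))).2 (sub_le_self _ (star_mul_self_nonneg v))

lemma norm_one_sub_mul_star_self_le_one {v : A} (hv : ‖v‖ ≤ 1) : ‖1 - v * star v‖ ≤ 1 := by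
  simpa using norm_one_sub_star_mul_self_le_one (v := star v) (by rwa [norm_star])

/- `[v, 1 - v v*]` is a contractive row and the transpose of `[v* v, Y (1 - v* v)]` a contractive
column. -/
lemma norm_mul_star_mul_add_le_one {v Y : A} (hv : ‖v‖ ≤ 1) (hY : ‖Y‖ ≤ 1) :
    ‖v * star v * v + (1 - v * star v) * Y * (1 - star v * v)‖ ≤ 1 := by
  let _ := CStarAlgebra.spectralOrder A
  let _ := CStarAlgebra.spectralOrderedRing A
  have sq_le {w : A} (hw : ‖w‖ ≤ 1) : (1 - w * star w) * (1 - w * star w) ≤ 1 - w * star w :=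
    mul_self_le_self_of_nonneg_of_le_one (sub_nonneg.2 (mul_star_self_le_one_iff.2 hw))
      (sub_le_self _ (mul_star_self_nonneg w))
  rw [mul_assoc v, mul_assoc (1 - v * star v)]
  refine norm_mul_add_mul_le_one ?_ ?_
  · calc v * star v + (1 - v * star v) * star (1 - v * star v)
        ≤ v * star v + (1 - v * star v) := by
          gcongr
          simpa using sq_le hv
      _ = 1 := by abel
  · calc star (star v * v) * (star v * v) +
          star (Y * (1 - star v * v)) * (Y * (1 - star v * v))
        ≤ star v * v + star (1 - star v * v) * 1 * (1 - star v * v) := by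
          refine add_le_add ?_ ?_
          · simpa using mul_self_le_self_of_nonneg_of_le_one (star_mul_self_nonneg v)
              (star_mul_self_le_one_iff.2 hv)
          · simpa [mul_assoc] using star_left_conjugate_le_conjugate
              (star_mul_self_le_one_iff.2 hY) (1 - star v * v)
      _ ≤ star v * v + (1 - star v * v) := by
          gcongr
          simpa using sq_le (w := star v) (by rwa [norm_star])
      _ = 1 := by abel

/- With `h = (1 - v v*) / 2`, the element is `w = (1 + h) v`, and `w w* = 1 - 3 h² - 2 h³`. -/
lemma norm_add_half_smul_le_one {v : A} (hv : ‖v‖ ≤ 1) :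
    ‖v + (2⁻¹ : ℂ) • ((1 - v * star v) * v)‖ ≤ 1 := by
  let _ := CStarAlgebra.spectralOrder A
  let _ := CStarAlgebra.spectralOrderedRing A
  obtain ⟨h, h_def⟩ : ∃ h : A, h = (2⁻¹ : ℝ) • (1 - v * star v) := ⟨_, rfl⟩
  have h_nonneg : 0 ≤ h := by
    rw [h_def]
    exact smul_nonneg (by norm_num) (sub_nonneg.2 (mul_star_self_le_one_iff.2 hv))
  have h_star : star h = h := (IsSelfAdjoint.of_nonneg h_nonneg).star_eq
  have mul_star : v * star v = 1 - (h + h) := by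
    rw [h_def, ← add_smul]
    norm_num
  have eq_mul : v + (2⁻¹ : ℂ) • ((1 - v * star v) * v) = (1 + h) * v := by
    rw [add_mul, one_mul, h_def, smul_mul_assoc, ← Complex.coe_smul]
    norm_num
  have sq_nonneg : 0 ≤ h * h := by simpa [h_star] using star_mul_self_nonneg h
  have cube_nonneg : 0 ≤ h * h * h := by simpa [h_star] using star_left_conjugate_nonneg h_nonneg h
  rw [eq_mul, ← mul_star_self_le_one_iff]
  calc (1 + h) * v * star ((1 + h) * v) = (1 + h) * (v * star v) * (1 + h) := by
        rw [star_mul, star_add, star_one, h_star]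
        noncomm_ring
    _ = 1 - (3 • (h * h) + 2 • (h * h * h)) := by
        rw [mul_star]
        noncomm_ring
    _ ≤ 1 := sub_le_self _ (by positivity)

end MassGain

namespace StarBimodule

variable {A E : Type*} [CStarAlgebra A] [NormedAddCommGroup E] [InnerProductSpace ℂ E]
  [CompleteSpace E] {b : StarBimodule A E}

namespace AlmostIntertwines

variable {v Y : A} {ξ η : E} {τ e : ℝ}

lemma nonneg (h : b.AlmostIntertwines τ v ξ η) : 0 ≤ τ := (norm_nonneg _).trans h.norm_defect_le

lemma add_half_smul (h : b.AlmostIntertwines τ v ξ η) (hv : ‖v‖ ≤ 1) :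
    b.AlmostIntertwines (3 * τ) (v + (2⁻¹ : ℂ) • ((1 - v * star v) * v)) ξ η := by
  refine (h.add (((h.one_sub_mul_star hv).mul h (norm_one_sub_mul_star_self_le_one hv) hv).smul
    _)).mono ?_
  norm_num
  linarith [h.nonneg]

lemma mul_star_mul_add (h : b.AlmostIntertwines τ v ξ η) (hv : ‖v‖ ≤ 1)
    (hY : b.AlmostIntertwines e Y ξ η) (hY_norm : ‖Y‖ ≤ 1) :
    b.AlmostIntertwines (7 * τ + e)
      (v * star v * v + (1 - v * star v) * Y * (1 - star v * v)) ξ η := by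
  have hv_star : ‖star v‖ ≤ 1 := by rwa [norm_star]
  have s_norm := norm_one_sub_mul_star_self_le_one hv
  have norm_mul_le_one {x y : A} (hx : ‖x‖ ≤ 1) (hy : ‖y‖ ≤ 1) : ‖x * y‖ ≤ 1 :=
    (norm_mul_le x y).trans (mul_le_one₀ hx (norm_nonneg _) hy)
  have main := (h.mul h.star hv hv_star).mul h (norm_mul_le_one hv hv_star) hv
  have corner := ((h.one_sub_mul_star hv).mul hY s_norm hY_norm).mul (h.one_sub_star_mul hv)
    (norm_mul_le_one s_norm hY_norm) (norm_one_sub_star_mul_self_le_one hv)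
  exact (main.add corner).mono (by linarith)

/- With `κ = Re ⟨v* η, v* (1 - v v*) η⟩`, the contraction `v + (1 - v v*) v / 2` gains `κ`. One of
`v v* v ± (1 - v v*) Y (1 - v* v)` gains the mass of the corner, up to a loss of `2 κ`. -/
lemma exists_gain (hv : b.AlmostIntertwines τ v ξ η) (hv_norm : ‖v‖ ≤ 1)
    (hY : b.AlmostIntertwines e Y ξ η) (hY_norm : ‖Y‖ ≤ 1) :
    ∃ v' : A, ‖v'‖ ≤ 1 ∧ b.AlmostIntertwines (7 * τ + e) v' ξ η ∧
      ‖b.left (star v) η‖ ^ 2 +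
          ‖b.left (1 - star v * v) (b.left (star Y) (b.left (1 - v * star v) η))‖ ^ 2 / 4 ≤
        ‖b.left (star v') η‖ ^ 2 := by
  set P := b.left (star v) η
  set Q := b.left (star v) (b.left (1 - v * star v) η)
  set D := b.left (1 - star v * v) (b.left (star Y) (b.left (1 - v * star v) η))
  rcases le_total (‖D‖ ^ 2 / 4) (inner ℂ P Q).re with overlap | overlap
  · refine ⟨_, norm_add_half_smul_le_one hv_norm,
      (hv.add_half_smul hv_norm).mono (by linarith [hv.nonneg, hY.nonneg]), ?_⟩
    have image : b.left (star (v + (2⁻¹ : ℂ) • ((1 - v * star v) * v))) η =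
        P + (2⁻¹ : ℂ) • Q := by
      simp [P, Q]
    rw [image, @norm_add_sq ℂ, inner_smul_right, norm_smul, RCLike.re_eq_complex_re]
    norm_num
    nlinarith [sq_nonneg (‖Q‖)]
  · have image (Z : A) :
        b.left (star (v * star v * v + (1 - v * star v) * Z * (1 - star v * v))) η =
          P - Q + b.left (1 - star v * v) (b.left (star Z) (b.left (1 - v * star v) η)) := by
      simp [P, Q]
    have loss_le : ‖P‖ ^ 2 - 2 * (inner ℂ P Q).re ≤ ‖P - Q‖ ^ 2 := by
      rw [@norm_sub_sq ℂ, RCLike.re_eq_complex_re]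
      linarith [sq_nonneg (‖Q‖)]
    have parallelogram := norm_add_sq_add_norm_sub_sq (P - Q) D
    rcases le_total (‖P - Q - D‖ ^ 2) (‖P - Q + D‖ ^ 2) with larger | larger
    · refine ⟨_, norm_mul_star_mul_add_le_one hv_norm hY_norm,
        hv.mul_star_mul_add hv_norm hY hY_norm, ?_⟩
      rw [image]
      change _ ≤ ‖P - Q + D‖ ^ 2
      linarith [sq_nonneg (‖D‖)]
    · refine ⟨_, norm_mul_star_mul_add_le_one hv_norm (by rwa [norm_neg]),
        hv.mul_star_mul_add hv_norm hY.neg (by rwa [norm_neg]), ?_⟩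
      rw [image, star_neg, map_neg, neg_apply, map_neg, ← sub_eq_add_neg]
      change _ ≤ ‖P - Q - D‖ ^ 2
      linarith [sq_nonneg (‖D‖)]

lemma half_le_norm_left_one_sub {ρ : ℝ} (h : b.AlmostIntertwines τ v ξ η) (hv : ‖v‖ ≤ 1)
    (hξ : ‖ξ‖ = 1) (hη : ‖η‖ = 1) (hρ : ρ ≤ 1 - ‖b.left (star v) η‖ ^ 2) (hτ : 4 * τ ≤ ρ) :
    ρ / 2 ≤ ‖b.left (1 - star v * v) ξ‖ := by
  have deficit_le : 1 - ‖b.left v ξ‖ ^ 2 ≤ ‖b.left (1 - star v * v) ξ‖ :=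
    calc 1 - ‖b.left v ξ‖ ^ 2 = (inner ℂ (b.left (1 - star v * v) ξ) ξ).re := by
          rw [norm_left_sq, map_sub, sub_apply, left_one_apply, inner_sub_left, Complex.sub_re,
            ← RCLike.re_eq_complex_re, inner_self_eq_norm_sq, hξ, one_pow]
      _ ≤ ‖b.left (1 - star v * v) ξ‖ := by
          refine (re_inner_le_norm (𝕜 := ℂ) _ _).trans_eq ?_
          rw [hξ, mul_one]
  linarith [(abs_le.1 (h.abs_norm_sq_sub_norm_sq_le hv hξ hη)).1]

end AlmostIntertwines

/-- Some finite family of elements is an intertwining system relating `ξ` and `η` up to `τ`. -/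
def HasIntertwiningSystem [PartialOrder A] (b : StarBimodule A E) (τ : ℝ) (ξ η : E) : Prop :=
  ∃ (ι : Type) (_ : Fintype ι) (a : ι → A), b.IntertwiningSystem τ a ξ η

section Iteration

variable [PartialOrder A] {v : A} {ξ η : E} {τ τ' : ℝ}

lemma HasIntertwiningSystem.mono (h : b.HasIntertwiningSystem τ ξ η) (hτ : τ ≤ τ') :
    b.HasIntertwiningSystem τ' ξ η := by
  obtain ⟨ι, _, a, ha⟩ := h
  have := ha.nonneg
  exact ⟨ι, _, a, ha.toIntertwiningFamily.mono (by gcongr), ha.norm_right_one_sub_le.trans hτ⟩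

lemma HasIntertwiningSystem.exists_gain [StarOrderedRing A] {γ β : ℝ} {m : ℕ}
    (h : b.HasIntertwiningSystem τ' ξ η) (hv : b.AlmostIntertwines τ' v ξ η) (hv_norm : ‖v‖ ≤ 1)
    (hξ : ‖ξ‖ = 1) (hη : ‖η‖ = 1) (hτ : 0 < τ) (hτ_le : τ ≤ 1) (hβ : 0 < β) (hβ_le : β ≤ 1)
    (hm : 2 < m * β) (hγ : γ = (β / (4 * m)) ^ 2) (mass : β ≤ ‖b.left (1 - star v * v) ξ‖ ^ 2)
    (hτ' : 40 * 10 ^ m * τ' ≤ τ * γ) :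
    ∃ v' : A, ‖v'‖ ≤ 1 ∧ b.AlmostIntertwines τ v' ξ η ∧
      ‖b.left (star v) η‖ ^ 2 + γ ^ 5 / 73728 ≤ ‖b.left (star v') η‖ ^ 2 := by
  obtain ⟨ι, _, a, ha⟩ := h
  have τ'_nonneg := ha.nonneg
  have m_pos : (0 : ℝ) < m := pos_of_mul_pos_left (two_pos.trans hm) hβ.le
  have one_le_m : (1 : ℝ) ≤ m := by exact_mod_cast m_pos
  have ratio_pos : 0 < β / (4 * m) := by positivity
  have ratio_le : β / (4 * m) ≤ 1 := (div_le_one (by positivity)).2 (by linarith)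
  have γ_pos : 0 < γ := by rw [hγ]; positivity
  have γ_le_ratio : γ ≤ β / (4 * m) := hγ ▸ pow_le_of_le_one ratio_pos.le ratio_le two_ne_zero
  have one_le_pow : (1 : ℝ) ≤ 10 ^ m := one_le_pow₀ (by norm_num)
  have τ'_le : 40 * τ' ≤ τ * γ := by nlinarith
  have τ'_le_γ : 40 * τ' ≤ γ := τ'_le.trans (mul_le_of_le_one_left γ_pos.le hτ_le)
  have τ'_le_τ : 40 * τ' ≤ τ :=
    τ'_le.trans (mul_le_of_le_one_right hτ.le (γ_le_ratio.trans ratio_le))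
  obtain ⟨κ, _, w, hw, w_mass⟩ := ha.exists_intertwiningFamily_mass_le hv hv_norm hξ hη hβ mass hm
    (by linarith)
  have total_le : 10 ^ m * τ' ^ 2 ≤ (τ / 2 * γ) ^ 2 / 400 := by
    have : (40 * 10 ^ m * τ') ^ 2 ≤ (τ * γ) ^ 2 := by gcongr
    nlinarith [le_mul_of_one_le_right (by positivity : 0 ≤ (10 : ℝ) ^ m * τ' ^ 2) one_le_pow]
  obtain ⟨Y, Y_norm, Y_mass, hY⟩ := (hw.mono total_le).exists_contraction
    (hη ▸ b.norm_left_le_of_norm_le_one (norm_one_sub_mul_star_self_le_one hv_norm) η)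
    (norm_one_sub_star_mul_self_le_one hv_norm) γ_pos (γ_le_ratio.trans ratio_le) (half_pos hτ)
    (hγ ▸ w_mass)
  obtain ⟨v', v'_norm, hv', gain⟩ := hv.exists_gain hv_norm hY Y_norm
  exact ⟨v', v'_norm, hv'.mono (by linarith), by linarith⟩

end Iteration

section Attainability

/-- Uniformly over all C*-algebras and all their Hilbert bimodules, a sufficiently good
intertwining system relating two unit vectors `ξ` and `η` yields a contraction that almost
intertwines them and carries all but `ρ` of the mass of `η`. -/
def DeficitAttainable (ρ : ℝ) : Prop := ∀ τ : ℝ, 0 < τ → ∃ δ : ℝ, 0 < δ ∧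
  ∀ (A : Type u) (E : Type v) [CStarAlgebra A] [NormedAddCommGroup E] [InnerProductSpace ℂ E]
    [CompleteSpace E] [PartialOrder A] [StarOrderedRing A] (b : StarBimodule A E) (ξ η : E),
    ‖ξ‖ = 1 → ‖η‖ = 1 → b.HasIntertwiningSystem δ ξ η →
    ∃ v : A, ‖v‖ ≤ 1 ∧ b.AlmostIntertwines τ v ξ η ∧ 1 - ρ ≤ ‖b.left (star v) η‖ ^ 2

namespace DeficitAttainable

variable {ρ ρ' : ℝ}

protected lemma mono (h : DeficitAttainable.{u, v} ρ) (hρ : ρ ≤ ρ') :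
    DeficitAttainable.{u, v} ρ' := by
  intro τ hτ
  obtain ⟨δ, hδ, attain⟩ := h τ hτ
  refine ⟨δ, hδ, fun A E _ _ _ _ _ _ b ξ η hξ hη system => ?_⟩
  obtain ⟨v, v_norm, hv, mass⟩ := attain A E b ξ η hξ hη system
  exact ⟨v, v_norm, hv, by linarith⟩

lemma one : DeficitAttainable.{u, v} 1 := fun τ hτ =>
  ⟨1, one_pos, fun A E _ _ _ _ _ _ b ξ η _ _ _ =>
    ⟨0, by simp, ⟨by simpa using hτ.le, by simpa using hτ.le⟩, by simp⟩⟩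

lemma exists_decrement {ρ₀ : ℝ} (hρ₀ : 0 < ρ₀) (hρ₀_le : ρ₀ ≤ 1) : ∃ c : ℝ, 0 < c ∧
    ∀ ρ, DeficitAttainable.{u, v} ρ → DeficitAttainable.{u, v} (max ρ₀ (ρ - c)) := by
  obtain ⟨β, hβ⟩ : ∃ β, β = (ρ₀ / 2) ^ 2 := ⟨_, rfl⟩
  have β_pos : 0 < β := by rw [hβ]; positivity
  have β_le : β ≤ 1 := by nlinarith
  obtain ⟨m, hm⟩ := exists_nat_gt (2 / β)
  have m_pos : (0 : ℝ) < m := (by positivity : 0 ≤ 2 / β).trans_lt hm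
  rw [div_lt_iff₀ β_pos] at hm
  obtain ⟨γ, hγ⟩ : ∃ γ, γ = (β / (4 * m)) ^ 2 := ⟨_, rfl⟩
  have γ_pos : 0 < γ := by rw [hγ]; positivity
  refine ⟨γ ^ 5 / 73728, by positivity, fun ρ h τ hτ => ?_⟩
  obtain ⟨τ', hτ'_pos, hτ'_le, hτ'⟩ : ∃ τ' : ℝ, 0 < τ' ∧ 4 * τ' ≤ min τ ρ₀ ∧
      40 * 10 ^ m * τ' ≤ min τ ρ₀ * γ := by
    refine ⟨min τ ρ₀ * min γ 1 / (40 * 10 ^ m), by positivity, ?_, ?_⟩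
    · rw [← mul_div_assoc, div_le_iff₀ (by positivity)]
      have : (1 : ℝ) ≤ 10 ^ m := one_le_pow₀ (by norm_num)
      nlinarith [min_le_right γ 1, lt_min hτ hρ₀]
    · rw [mul_div_cancel₀ _ (by positivity)]
      gcongr
      exact min_le_left γ 1
  obtain ⟨δ, hδ, attain⟩ := h τ' hτ'_pos
  refine ⟨min δ τ', by positivity, fun A E _ _ _ _ _ _ b ξ η hξ hη system => ?_⟩
  obtain ⟨v, v_norm, hv, mass⟩ := attain A E b ξ η hξ hη (system.mono (min_le_left _ _))
  rcases le_total (1 - ρ₀) (‖b.left (star v) η‖ ^ 2) with attained | deficient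
  · exact ⟨v, v_norm, hv.mono (by linarith [min_le_left τ ρ₀]),
      le_trans (by gcongr; exact le_max_left _ _) attained⟩
  · have half_le := hv.half_le_norm_left_one_sub v_norm hξ hη (le_sub_comm.1 deficient)
      (hτ'_le.trans (min_le_right _ _))
    obtain ⟨v', v'_norm, hv', gain⟩ := (system.mono (min_le_right δ τ')).exists_gain hv v_norm hξ hη
      (lt_min hτ hρ₀) ((min_le_right _ _).trans hρ₀_le) β_pos β_le hm hγ
      (hβ ▸ pow_le_pow_left₀ (by positivity) half_le 2) hτ'
    exact ⟨v', v'_norm, hv'.mono (min_le_left _ _), by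
      linarith [le_max_right ρ₀ (ρ - γ ^ 5 / 73728)]⟩

lemma of_pos_of_le_one {ρ₀ : ℝ} (hρ₀ : 0 < ρ₀) (hρ₀_le : ρ₀ ≤ 1) :
    DeficitAttainable.{u, v} ρ₀ := by
  obtain ⟨c, hc, decrement⟩ := exists_decrement.{u, v} hρ₀ hρ₀_le
  have iterate (k : ℕ) : DeficitAttainable.{u, v} (max ρ₀ (1 - k * c)) := by
    induction k with
    | zero => exact one.mono (by simp)
    | succ k ih =>
      refine (decrement _ ih).mono (max_le (le_max_left _ _) ?_)
      push_cast
      rw [sub_le_iff_le_add, max_le_iff]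
      constructor
      · linarith [le_max_left ρ₀ (1 - (k + 1) * c)]
      · linarith [le_max_right ρ₀ (1 - (k + 1) * c)]
  obtain ⟨k, hk⟩ := exists_nat_gt (1 / c)
  rw [div_lt_iff₀ hc] at hk
  exact (iterate k).mono (max_le le_rfl (by linarith))

end DeficitAttainable

theorem exists_forall_hasIntertwiningSystem_exists_unitary {ε : ℝ} (hε : 0 < ε) :
    ∃ δ : ℝ, 0 < δ ∧
      ∀ (A : Type u) (E : Type v) [CStarAlgebra A] [NormedAddCommGroup E]
        [InnerProductSpace ℂ E] [CompleteSpace E] [PartialOrder A] [StarOrderedRing A]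
        (b : StarBimodule A E) (ξ η : E), ‖ξ‖ = 1 → ‖η‖ = 1 → b.HasIntertwiningSystem δ ξ η →
        ∃ u ∈ unitary A, ‖b.defect ξ η u‖ < ε := by
  obtain ⟨κ, hκ_lt, hκ, hκ_le⟩ : ∃ κ : ℝ, κ + √(20 * κ) < ε ∧ 0 < κ ∧ κ ≤ 1 := by
    have limit : Filter.Tendsto (fun κ : ℝ => κ + √(20 * κ)) (nhdsWithin 0 (Set.Ioi 0)) (nhds 0) :=
      tendsto_nhdsWithin_of_tendsto_nhds (Continuous.tendsto' (by fun_prop) 0 0 (by simp))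
    exact ((limit.eventually_lt_const hε).and (Ioc_mem_nhdsGT one_pos)).exists
  obtain ⟨δ, hδ, attain⟩ := DeficitAttainable.of_pos_of_le_one.{u, v} hκ hκ_le κ hκ
  refine ⟨δ, hδ, fun A E _ _ _ _ _ _ b ξ η hξ hη system => ?_⟩
  obtain ⟨v, v_norm, hv, mass⟩ := attain A E b ξ η hξ hη system
  obtain ⟨u, hu, u_le⟩ := hv.exists_unitary hκ v_norm hξ hη mass
  exact ⟨u, hu, u_le.trans_lt hκ_lt⟩

end Attainability

end StarBimodule

/-! ### Normalizing an almost unit family -/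

section Cutoff

/-- The function `t ↦ max(1, t)^(-1/2)`. It cuts a positive element `h` down to `F(h) h F(h) ≤ 1`
and is `1` where `h ≤ 1`. -/
def cutoffFun (t : ℝ) : ℝ := (√(max 1 t))⁻¹

lemma one_le_sqrt_max_one (t : ℝ) : 1 ≤ √(max 1 t) := Real.one_le_sqrt.2 (le_max_left _ _)

lemma continuous_cutoffFun : Continuous cutoffFun :=
  Continuous.inv₀ (by fun_prop) fun t => (one_pos.trans_le (one_le_sqrt_max_one t)).ne'

lemma cutoffFun_nonneg (t : ℝ) : 0 ≤ cutoffFun t := inv_nonneg.2 (Real.sqrt_nonneg _)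

lemma cutoffFun_le_one (t : ℝ) : cutoffFun t ≤ 1 := inv_le_one_of_one_le₀ (one_le_sqrt_max_one t)

lemma cutoffFun_sq_mul_max (t : ℝ) : cutoffFun t ^ 2 * max 1 t = 1 := by
  have max_pos : 0 < max 1 t := one_pos.trans_le (le_max_left _ _)
  rw [cutoffFun, inv_pow, Real.sq_sqrt max_pos.le, inv_mul_cancel₀ max_pos.ne']

lemma one_sub_cutoffFun_sq_mul_max_le (t : ℝ) :
    (1 - cutoffFun t) ^ 2 * max 1 t ≤ (1 - t) * (1 - t) := by
  rcases le_total t 1 with ht | ht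
  · simpa [cutoffFun, max_eq_left ht] using mul_self_nonneg (1 - t)
  · have sq_mul := cutoffFun_sq_mul_max t
    rw [max_eq_right ht] at sq_mul ⊢
    have nonneg := cutoffFun_nonneg t
    have le_one := cutoffFun_le_one t
    have one_le_mul : 1 ≤ t * cutoffFun t := by nlinarith
    calc (1 - cutoffFun t) ^ 2 * t = t * (1 - cutoffFun t) * (1 - cutoffFun t) := by ring
      _ ≤ (t - 1) * (t - 1) :=
        mul_le_mul (by linarith) (by nlinarith) (by linarith) (by linarith)
      _ = (1 - t) * (1 - t) := by ring

lemma cfc_mul_self_mul_cfc {A : Type*} [CStarAlgebra A] {G : ℝ → ℝ} (hG : Continuous G) {h : A}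
    (hh : IsSelfAdjoint h) :
    cfc G h * h * cfc G h = cfc (fun t => G t * t * G t) h := by
  rw [cfc_mul _ G h (by fun_prop) (by fun_prop), cfc_mul G (fun t => t) h (by fun_prop)
    (by fun_prop), cfc_id' ℝ h]

/-- `f` cuts the positive element `h` down to a contraction, and deviates from `1` no more than `h`
does. -/
structure IsCutoff {A : Type*} [CStarAlgebra A] [PartialOrder A] (h f : A) : Prop where
  star_eq : star f = f
  norm_le_one : ‖f‖ ≤ 1
  norm_one_sub_le_one : ‖1 - f‖ ≤ 1
  conjugate_le_one : f * h * f ≤ 1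
  one_sub_mul_self_le : (1 - f) * (1 - f) ≤ (1 - h) * (1 - h)
  one_sub_conjugate_le : (1 - f) * h * (1 - f) ≤ (1 - h) * (1 - h)

variable {A : Type*} [CStarAlgebra A] [PartialOrder A]

protected lemma IsCutoff.op {h f : A} (hf : IsCutoff h f) :
    IsCutoff (MulOpposite.op h) (MulOpposite.op f) where
  star_eq := congrArg MulOpposite.op hf.star_eq
  norm_le_one := hf.norm_le_one
  norm_one_sub_le_one := hf.norm_one_sub_le_one
  conjugate_le_one := (mul_assoc f h f).symm.trans_le hf.conjugate_le_one
  one_sub_mul_self_le := hf.one_sub_mul_self_le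
  one_sub_conjugate_le := (mul_assoc (1 - f) h (1 - f)).symm.trans_le hf.one_sub_conjugate_le

variable [StarOrderedRing A]

lemma isCutoff_cfc_cutoffFun {h : A} (hh : 0 ≤ h) : IsCutoff h (cfc cutoffFun h) := by
  have h_sa : IsSelfAdjoint h := .of_nonneg hh
  have F_cont := continuous_cutoffFun
  have one_sub_cutoff : 1 - cfc cutoffFun h = cfc (fun t => 1 - cutoffFun t) h := by
    rw [cfc_sub (fun _ => (1 : ℝ)) cutoffFun h (by fun_prop) (by fun_prop), cfc_const_one ℝ h]
  have one_sub_sq : (1 - h) * (1 - h) = cfc (fun t : ℝ => (1 - t) * (1 - t)) h := by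
    rw [cfc_mul (fun t : ℝ => 1 - t) _ h (by fun_prop) (by fun_prop),
      cfc_sub (fun _ => (1 : ℝ)) (fun t => t) h (by fun_prop) (by fun_prop), cfc_const_one ℝ h,
      cfc_id' ℝ h]
  constructor
  · exact (cfc_predicate cutoffFun h : IsSelfAdjoint _).star_eq
  · refine norm_cfc_le zero_le_one fun t _ => ?_
    rw [Real.norm_of_nonneg (cutoffFun_nonneg t)]
    exact cutoffFun_le_one t
  · rw [one_sub_cutoff]
    refine norm_cfc_le zero_le_one fun t _ => ?_
    rw [Real.norm_of_nonneg (sub_nonneg.2 (cutoffFun_le_one t))]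
    exact sub_le_self 1 (cutoffFun_nonneg t)
  · rw [cfc_mul_self_mul_cfc F_cont h_sa]
    refine cfc_le_one _ _ fun t _ => ?_
    nlinarith [cutoffFun_sq_mul_max t, le_max_right 1 t, sq_nonneg (cutoffFun t)]
  · rw [one_sub_sq, one_sub_cutoff, ← cfc_mul _ _ h (by fun_prop) (by fun_prop)]
    refine cfc_mono (fun t _ => ?_) (by fun_prop) (by fun_prop)
    nlinarith [one_sub_cutoffFun_sq_mul_max_le t, le_max_left 1 t, sq_nonneg (1 - cutoffFun t)]
  · rw [one_sub_cutoff, cfc_mul_self_mul_cfc (by fun_prop) h_sa, one_sub_sq]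
    refine cfc_mono (fun t _ => ?_) (by fun_prop) (by fun_prop)
    nlinarith [one_sub_cutoffFun_sq_mul_max_le t, le_max_right 1 t, sq_nonneg (1 - cutoffFun t)]

lemma sum_star_mul_self_cutoff_le_one {ι : Type*} [Fintype ι] {a : ι → A} {f g : A}
    (hf : IsCutoff (∑ j, star (a j) * a j) f) (hg : ‖g‖ ≤ 1) :
    ∑ j, star (g * a j * f) * (g * a j * f) ≤ 1 :=
  calc ∑ j, star (g * a j * f) * (g * a j * f)
      = star f * (∑ j, star (a j) * (star g * g) * a j) * f := by
        simp only [Finset.mul_sum, Finset.sum_mul, star_mul, mul_assoc]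
    _ ≤ star f * (∑ j, star (a j) * a j) * f := by
        refine star_left_conjugate_le_conjugate (Finset.sum_le_sum fun j _ => ?_) f
        simpa using star_left_conjugate_le_conjugate (star_mul_self_le_one_iff.2 hg) (a j)
    _ ≤ 1 := by
        rw [hf.star_eq]
        exact hf.conjugate_le_one

lemma isBicontraction_cutoff {ι : Type*} [Fintype ι] {a : ι → A} {f g : A}
    (hf : IsCutoff (∑ j, star (a j) * a j) f) (hg : IsCutoff (∑ j, a j * star (a j)) g) :
    IsBicontraction fun j => g * a j * f where
  sum_star_mul_self_le := sum_star_mul_self_cutoff_le_one hf hg.norm_le_one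
  sum_mul_star_self_le := by
    have := sum_star_mul_self_cutoff_le_one (a := fun j => star (a j)) (f := g) (g := f)
      (by simpa only [star_star] using hg) hf.norm_le_one
    simpa only [star_mul, star_star, hf.star_eq, hg.star_eq, mul_assoc] using this

end Cutoff

lemma norm_toLp_le_of_sum_sq_le {ι F : Type*} [Fintype ι] [SeminormedAddCommGroup F]
    {x : ι → F} {c : ℝ} (hc : 0 ≤ c)
    (h : ∑ j, ‖x j‖ ^ 2 ≤ c ^ 2) :
    ‖WithLp.toLp 2 x‖ ≤ c :=
  le_of_sq_le_sq ((PiLp.norm_sq_eq_of_L2 _ _).trans_le h) hc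

namespace StarBimodule

open MulOpposite

variable {A E : Type*} [CStarAlgebra A] [NormedAddCommGroup E] [InnerProductSpace ℂ E]
  [CompleteSpace E] {b : StarBimodule A E} {ι : Type*} [Fintype ι]

section Columns

/-- The vector `(aⱼ ξ)ⱼ` of the Hilbert space sum of copies of `E`. -/
def leftColumn (b : StarBimodule A E) (a : ι → A) (ξ : E) : PiLp 2 fun _ : ι => E :=
  WithLp.toLp 2 fun j => b.left (a j) ξ

/-- The vector `(ξ aⱼ)ⱼ` of the Hilbert space sum of copies of `E`. -/
def rightColumn (b : StarBimodule A E) (a : ι → A) (ξ : E) : PiLp 2 fun _ : ι => E :=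
  WithLp.toLp 2 fun j => b.right (a j) ξ

lemma norm_leftColumn_sq (a : ι → A) (ξ : E) :
    ‖b.leftColumn a ξ‖ ^ 2 = ∑ j, ‖b.left (a j) ξ‖ ^ 2 :=
  PiLp.norm_sq_eq_of_L2 _ _

lemma norm_rightColumn_sq (a : ι → A) (ξ : E) :
    ‖b.rightColumn a ξ‖ ^ 2 = ∑ j, ‖b.right (a j) ξ‖ ^ 2 :=
  PiLp.norm_sq_eq_of_L2 _ _

lemma norm_leftColumn_sub_rightColumn_sq (a : ι → A) (ξ η : E) :
    ‖b.leftColumn a ξ - b.rightColumn a η‖ ^ 2 = ∑ j, ‖b.defect ξ η (a j)‖ ^ 2 :=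
  PiLp.norm_sq_eq_of_L2 _ _

end Columns

section Normalization

/-- The family `a` has row and column sums of squares almost acting as `1` on the vectors `ξ` and
`η`, which it almost intertwines. -/
structure AlmostRelates (b : StarBimodule A E) (δ : ℝ) (a : ι → A) (ξ η : E) : Prop where
  norm_left_one_sub_le : ‖b.left (1 - ∑ j, star (a j) * a j) ξ‖ ≤ δ
  norm_right_one_sub_le : ‖b.right (1 - ∑ j, star (a j) * a j) ξ‖ ≤ δ
  norm_left_one_sub_mul_star_le : ‖b.left (1 - ∑ j, a j * star (a j)) η‖ ≤ δ
  norm_right_one_sub_mul_star_le : ‖b.right (1 - ∑ j, a j * star (a j)) η‖ ≤ δ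
  sum_norm_defect_sq_le : ∑ j, ‖b.defect ξ η (a j)‖ ^ 2 ≤ δ

variable {a : ι → A} {ξ η : E} {f g : A} {δ T τ : ℝ}

protected lemma AlmostRelates.opposite (h : b.AlmostRelates δ a ξ η) :
    b.opposite.AlmostRelates δ (fun j => op (a j)) η ξ where
  norm_left_one_sub_le := by
    simp only [← op_star, ← op_mul, ← Finset.op_sum]
    exact h.norm_right_one_sub_mul_star_le
  norm_right_one_sub_le := by
    simp only [← op_star, ← op_mul, ← Finset.op_sum]
    exact h.norm_left_one_sub_mul_star_le
  norm_left_one_sub_mul_star_le := by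
    simp only [← op_star, ← op_mul, ← Finset.op_sum]
    exact h.norm_right_one_sub_le
  norm_right_one_sub_mul_star_le := by
    simp only [← op_star, ← op_mul, ← Finset.op_sum]
    exact h.norm_left_one_sub_le
  sum_norm_defect_sq_le := by
    refine le_of_eq_of_le (Finset.sum_congr rfl fun j _ => ?_) h.sum_norm_defect_sq_le
    rw [← norm_neg, defect_apply, neg_sub]
    rfl

lemma abs_sum_norm_left_sq_sub_le (a : ι → A) {ξ : E} (hξ : ‖ξ‖ ≤ 1) :
    |∑ j, ‖b.left (a j) ξ‖ ^ 2 - ‖ξ‖ ^ 2| ≤ ‖b.left (1 - ∑ j, star (a j) * a j) ξ‖ := by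
  have inner_eq : (inner ℂ (b.left (1 - ∑ j, star (a j) * a j) ξ) ξ).re =
      ‖ξ‖ ^ 2 - ∑ j, ‖b.left (a j) ξ‖ ^ 2 := by
    rw [sum_norm_left_sq, map_sub, sub_apply, left_one_apply, inner_sub_left, Complex.sub_re]
    exact congrArg (· - _) (inner_self_eq_norm_sq (𝕜 := ℂ) ξ)
  rw [abs_sub_comm, ← inner_eq]
  exact ((Complex.abs_re_le_norm _).trans (norm_inner_le_norm _ _)).trans
    (mul_le_of_le_one_right (norm_nonneg _) hξ)

lemma abs_sum_norm_right_sq_sub_le (a : ι → A) {ξ : E} (hξ : ‖ξ‖ ≤ 1) :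
    |∑ j, ‖b.right (a j) ξ‖ ^ 2 - ‖ξ‖ ^ 2| ≤ ‖b.right (1 - ∑ j, a j * star (a j)) ξ‖ := by
  have := b.opposite.abs_sum_norm_left_sq_sub_le (fun j => op (a j)) hξ
  simp only [← op_star, ← op_mul, ← Finset.op_sum] at this
  exact this

lemma AlmostRelates.one_sub_le_norm_leftColumn (h : b.AlmostRelates (T ^ 2) a ξ η)
    (hξ : ‖ξ‖ = 1) (hT : 0 ≤ T) (hT_le : T ≤ 1) : 1 - T ≤ ‖b.leftColumn a ξ‖ := by
  have mass := (abs_le.1 ((b.abs_sum_norm_left_sq_sub_le a hξ.le).trans h.norm_left_one_sub_le)).1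
  rw [hξ, ← norm_leftColumn_sq] at mass
  nlinarith [norm_nonneg (b.leftColumn a ξ)]

/- The squared norms of `x ξ - η x` and `x* η - ξ x*` have the same cross term. -/
lemma norm_defect_star_sq_add (x : A) (ξ η : E) :
    ‖b.defect η ξ (star x)‖ ^ 2 + (‖b.left x ξ‖ ^ 2 + ‖b.right x η‖ ^ 2) =
      ‖b.defect ξ η x‖ ^ 2 + (‖b.left (star x) η‖ ^ 2 + ‖b.right (star x) ξ‖ ^ 2) := by
  rw [defect_apply, defect_apply, norm_sub_rev (b.left x ξ), @norm_sub_sq ℂ, @norm_sub_sq ℂ,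
    inner_left_star_right_star]
  ring

section Order

variable [PartialOrder A] [StarOrderedRing A]

lemma norm_left_one_sub_sq_le (ha : ∑ j, star (a j) * a j ≤ 1) (ξ : E) :
    ‖b.left (1 - ∑ j, star (a j) * a j) ξ‖ ^ 2 ≤ ‖ξ‖ ^ 2 - ∑ j, ‖b.left (a j) ξ‖ ^ 2 := by
  set h := ∑ j, star (a j) * a j with h_def
  have h_nonneg : 0 ≤ h := Finset.sum_nonneg fun j _ => star_mul_self_nonneg _
  have h_star : star (1 - h) = 1 - h :=
    (IsSelfAdjoint.of_nonneg (sub_nonneg.2 ha)).star_eq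
  rw [norm_left_sq, h_star, sum_norm_left_sq, ← h_def]
  refine (b.re_inner_left_mono (mul_self_le_self_of_nonneg_of_le_one (sub_nonneg.2 ha)
    (sub_le_self 1 h_nonneg)) ξ).trans_eq ?_
  rw [map_sub, sub_apply, left_one_apply, inner_sub_left, Complex.sub_re]
  exact congrArg (· - _) (inner_self_eq_norm_sq (𝕜 := ℂ) ξ)

lemma norm_right_one_sub_sq_le (ha : ∑ j, star (a j) * a j ≤ 1) (ξ : E) :
    ‖b.right (1 - ∑ j, star (a j) * a j) ξ‖ ^ 2 ≤
      ‖ξ‖ ^ 2 - ∑ j, ‖b.right (star (a j)) ξ‖ ^ 2 := by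
  have op_sum : ∑ j, star (op (star (a j))) * op (star (a j)) = op (∑ j, star (a j) * a j) := by
    simp [Finset.op_sum]
  have := b.opposite.norm_left_one_sub_sq_le (a := fun j => op (star (a j)))
    (by rw [op_sum]; exact ha) ξ
  rwa [op_sum] at this

lemma norm_left_one_sub_cutoff_le (hf : IsCutoff (∑ j, star (a j) * a j) f) (ξ : E) :
    ‖b.left (1 - f) ξ‖ ≤ ‖b.left (1 - ∑ j, star (a j) * a j) ξ‖ := by
  refine le_of_sq_le_sq ?_ (norm_nonneg _)
  rw [norm_left_sq, norm_left_sq]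
  simpa [hf.star_eq] using b.re_inner_left_mono hf.one_sub_mul_self_le ξ

lemma sum_norm_left_left_one_sub_cutoff_sq_le (hf : IsCutoff (∑ j, star (a j) * a j) f) (ξ : E) :
    ∑ j, ‖b.left (a j) (b.left (1 - f) ξ)‖ ^ 2 ≤ ‖b.left (1 - ∑ j, star (a j) * a j) ξ‖ ^ 2 := by
  have conjugate : ∑ j, star (a j * (1 - f)) * (a j * (1 - f)) =
      (1 - f) * (∑ j, star (a j) * a j) * (1 - f) := by
    simp only [star_mul, star_sub, star_one, hf.star_eq, Finset.mul_sum, Finset.sum_mul, mul_assoc]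
  simp only [← left_mul_apply]
  rw [sum_norm_left_sq, conjugate, norm_left_sq]
  simpa using b.re_inner_left_mono hf.one_sub_conjugate_le ξ

lemma AlmostRelates.sum_norm_left_one_sub_cutoff_right_sq_le
    (h : b.AlmostRelates (T ^ 2) a ξ η)
    (hg : IsCutoff (∑ j, a j * star (a j)) g) (hT_le : T ^ 2 ≤ 1) :
    ∑ j, ‖b.left (1 - g) (b.right (a j) η)‖ ^ 2 ≤ 2 * T ^ 2 := by
  simp only [left_right_comm]
  set ζ := b.left (1 - g) η
  have ζ_le : ‖ζ‖ ≤ T ^ 2 := by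
    have := b.norm_left_one_sub_cutoff_le (a := fun j => star (a j))
      (by simpa only [star_star] using hg) η
    simp only [star_star] at this
    exact this.trans h.norm_left_one_sub_mul_star_le
  have defect_le : ‖b.right (1 - ∑ j, a j * star (a j)) ζ‖ ≤ T ^ 2 := by
    rw [← left_right_comm]
    exact (b.norm_left_le_of_norm_le_one hg.norm_one_sub_le_one _).trans
      h.norm_right_one_sub_mul_star_le
  have := (abs_le.1 (b.abs_sum_norm_right_sq_sub_le a (ζ_le.trans hT_le))).2
  nlinarith [norm_nonneg ζ]

lemma AlmostRelates.norm_leftColumn_sub_cutoff_le (h : b.AlmostRelates (T ^ 2) a ξ η)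
    (hf : IsCutoff (∑ j, star (a j) * a j) f)
    (hg : IsCutoff (∑ j, a j * star (a j)) g) (hT : 0 ≤ T) (hT_le : T ≤ 1) :
    ‖b.leftColumn a ξ - b.leftColumn (fun j => g * a j * f) ξ‖ ≤ 4 * T := by
  have T_sq_le : T ^ 2 ≤ 1 := pow_le_one₀ hT hT_le
  have right_part :
      ‖WithLp.toLp 2 fun j => b.left g (b.left (a j) (b.left (1 - f) ξ))‖ ≤ T := by
    refine norm_toLp_le_of_sum_sq_le hT ?_
    calc ∑ j, ‖b.left g (b.left (a j) (b.left (1 - f) ξ))‖ ^ 2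
        ≤ ∑ j, ‖b.left (a j) (b.left (1 - f) ξ)‖ ^ 2 := by
          gcongr
          exact b.norm_left_le_of_norm_le_one hg.norm_le_one _
      _ ≤ (T ^ 2) ^ 2 := (b.sum_norm_left_left_one_sub_cutoff_sq_le hf ξ).trans
          (by gcongr; exact h.norm_left_one_sub_le)
      _ ≤ T ^ 2 := pow_le_of_le_one (sq_nonneg T) T_sq_le two_ne_zero
  have left_part : ‖WithLp.toLp 2 fun j => b.left (1 - g) (b.right (a j) η)‖ ≤ 2 * T := by
    refine norm_toLp_le_of_sum_sq_le (by positivity) ?_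
    linarith [h.sum_norm_left_one_sub_cutoff_right_sq_le hg T_sq_le, sq_nonneg T]
  have defect_part : ‖WithLp.toLp 2 fun j => b.left (1 - g) (b.defect ξ η (a j))‖ ≤ T := by
    refine norm_toLp_le_of_sum_sq_le hT (le_trans ?_ h.sum_norm_defect_sq_le)
    gcongr
    exact b.norm_left_le_of_norm_le_one hg.norm_one_sub_le_one _
  have split : b.leftColumn a ξ - b.leftColumn (fun j => g * a j * f) ξ =
      WithLp.toLp 2 (fun j => b.left g (b.left (a j) (b.left (1 - f) ξ))) +
        (WithLp.toLp 2 (fun j => b.left (1 - g) (b.right (a j) η)) +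
          WithLp.toLp 2 fun j => b.left (1 - g) (b.defect ξ η (a j))) := by
    ext j
    simp [leftColumn, defect_apply]
    abel
  rw [split]
  exact (norm_add_le_of_le right_part (norm_add_le_of_le left_part defect_part)).trans_eq (by ring)

lemma AlmostRelates.norm_rightColumn_sub_cutoff_le (h : b.AlmostRelates (T ^ 2) a ξ η)
    (hf : IsCutoff (∑ j, star (a j) * a j) f)
    (hg : IsCutoff (∑ j, a j * star (a j)) g) (hT : 0 ≤ T) (hT_le : T ≤ 1) :
    ‖b.rightColumn a η - b.rightColumn (fun j => g * a j * f) η‖ ≤ 4 * T := by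
  have := h.opposite.norm_leftColumn_sub_cutoff_le
    (by simpa only [Finset.op_sum, op_mul, op_star] using hg.op)
    (by simpa only [Finset.op_sum, op_mul, op_star] using hf.op) hT hT_le
  simp only [← op_mul, ← mul_assoc] at this
  exact this

lemma intertwiningSystem_of_isBicontraction (ha : IsBicontraction a) (hξ : ‖ξ‖ = 1)
    (hη : ‖η‖ = 1) (hτ : 0 ≤ τ)
    (h : 2 + ‖b.leftColumn a ξ - b.rightColumn a η‖ ^ 2 ≤
      τ ^ 2 + (‖b.leftColumn a ξ‖ ^ 2 + ‖b.rightColumn a η‖ ^ 2)) :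
    b.IntertwiningSystem τ a ξ η := by
  rw [norm_leftColumn_sub_rightColumn_sq, norm_leftColumn_sq, norm_rightColumn_sq] at h
  have left_le := b.sum_norm_left_sq_le ha.sum_star_mul_self_le ξ
  have right_le := b.sum_norm_right_sq_le ha.sum_mul_star_self_le η
  have left_star_le := b.sum_norm_left_sq_le ha.star.sum_star_mul_self_le η
  have right_star_le := b.sum_norm_right_sq_le ha.star.sum_mul_star_self_le ξ
  have exchange := Finset.sum_congr rfl fun j (_ : j ∈ Finset.univ) =>
    b.norm_defect_star_sq_add (a j) ξ η
  simp only [Finset.sum_add_distrib] at exchange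
  rw [hξ] at left_le right_star_le
  rw [hη] at right_le left_star_le
  have defect_star_nonneg : 0 ≤ ∑ j, ‖b.defect η ξ (star (a j))‖ ^ 2 := by positivity
  refine ⟨⟨ha, by linarith, by linarith⟩, le_of_sq_le_sq ?_ hτ⟩
  refine (b.norm_right_one_sub_sq_le ha.sum_star_mul_self_le ξ).trans ?_
  rw [hξ]
  linarith

lemma AlmostRelates.hasIntertwiningSystem {ι : Type} [Fintype ι] {a : ι → A}
    (h : b.AlmostRelates (T ^ 2) a ξ η) (hξ : ‖ξ‖ = 1) (hη : ‖η‖ = 1) (hT : 0 ≤ T)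
    (hT_le : 5 * T ≤ 1) (hτ : 0 ≤ τ) (hTτ : 101 * T ≤ τ ^ 2) :
    b.HasIntertwiningSystem τ ξ η := by
  have hf := isCutoff_cfc_cutoffFun
    (Finset.sum_nonneg fun j (_ : j ∈ Finset.univ) => star_mul_self_nonneg (a j))
  have hg := isCutoff_cfc_cutoffFun
    (Finset.sum_nonneg fun j (_ : j ∈ Finset.univ) => mul_star_self_nonneg (a j))
  refine ⟨ι, inferInstance, _,
    intertwiningSystem_of_isBicontraction (isBicontraction_cutoff hf hg) hξ hη hτ ?_⟩
  have hT_le_one : T ≤ 1 := by linarith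
  have left_near := h.norm_leftColumn_sub_cutoff_le hf hg hT hT_le_one
  have right_near := h.norm_rightColumn_sub_cutoff_le hf hg hT hT_le_one
  have left_mass := h.one_sub_le_norm_leftColumn hξ hT hT_le_one
  have right_mass : 1 - T ≤ ‖b.rightColumn a η‖ :=
    h.opposite.one_sub_le_norm_leftColumn hη hT hT_le_one
  have defect_le : ‖b.leftColumn a ξ - b.rightColumn a η‖ ≤ T :=
    norm_toLp_le_of_sum_sq_le hT h.sum_norm_defect_sq_le
  set L := b.leftColumn a ξ
  set R := b.rightColumn a η
  set L' := b.leftColumn _ ξ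
  set R' := b.rightColumn _ η
  have left_mass' : 1 - 5 * T ≤ ‖L'‖ := by linarith [norm_sub_norm_le L L']
  have right_mass' : 1 - 5 * T ≤ ‖R'‖ := by linarith [norm_sub_norm_le R R']
  have defect_le' : ‖L' - R'‖ ≤ 9 * T := by
    have := norm_sub_le_norm_sub_add_norm_sub L' L R'
    have := norm_sub_le_norm_sub_add_norm_sub L R R'
    linarith [norm_sub_rev L L']
  nlinarith [norm_nonneg (L' - R')]

end Order

end Normalization

end StarBimodule

/-! ### Amplification to tuples -/

section Diagonal

variable (κ : Type*) [Fintype κ] {E : Type*} [NormedAddCommGroup E] [InnerProductSpace ℂ E]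
  [CompleteSpace E]

/-- The amplification of operators on `E` to the Hilbert sum of copies of `E` indexed by `κ`,
acting coordinatewise. -/
def diagonalAmplification :
    (E →L[ℂ] E) →⋆ₐ[ℂ] (PiLp 2 (fun _ : κ => E) →L[ℂ] PiLp 2 (fun _ : κ => E)) where
  toFun T :=
    { toFun := fun x => WithLp.toLp 2 fun k => T (x k)
      map_add' := fun x y => by ext k; simp
      map_smul' := fun c x => by ext k; simp
      cont := by fun_prop }
  map_one' := rfl
  map_mul' _ _ := rfl
  map_zero' := rfl
  map_add' _ _ := rfl
  commutes' c := by ext x k; simp [Algebra.algebraMap_eq_smul_one]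
  map_star' T := by
    rw [ContinuousLinearMap.star_eq_adjoint, ContinuousLinearMap.star_eq_adjoint,
      ContinuousLinearMap.eq_adjoint_iff]
    intro x y
    simp [PiLp.inner_apply, ContinuousLinearMap.adjoint_inner_left]

end Diagonal

section NormalizedTuple

variable {κ E : Type*} [Fintype κ] [NormedAddCommGroup E] [InnerProductSpace ℂ E]

/-- A tuple as a vector of the Hilbert sum, scaled so that tuples of unit vectors have norm one. -/
def normalizedTuple : (κ → E) →ₗ[ℂ] PiLp 2 (fun _ : κ => E) :=
  ((√(Fintype.card κ : ℝ))⁻¹ : ℂ) • (WithLp.linearEquiv 2 ℂ (κ → E)).symm.toLinearMap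

lemma normalizedTuple_apply (ξ : κ → E) (k : κ) :
    normalizedTuple ξ k = ((√(Fintype.card κ : ℝ))⁻¹ : ℂ) • ξ k := rfl

lemma norm_normalizedTuple_sq (ξ : κ → E) :
    ‖normalizedTuple ξ‖ ^ 2 = (∑ k, ‖ξ k‖ ^ 2) / Fintype.card κ := by
  rw [PiLp.norm_sq_eq_of_L2, Finset.sum_div]
  refine Finset.sum_congr rfl fun k _ => ?_
  rw [normalizedTuple_apply, norm_smul, norm_inv, Complex.norm_real,
    Real.norm_of_nonneg (Real.sqrt_nonneg _), mul_pow, inv_pow, Real.sq_sqrt (Nat.cast_nonneg _),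
    inv_mul_eq_div]

lemma norm_normalizedTuple_le {ξ : κ → E} {c : ℝ} (hc : 0 ≤ c) (h : ∀ k, ‖ξ k‖ ≤ c) :
    ‖normalizedTuple ξ‖ ≤ c := by
  refine le_of_sq_le_sq ?_ hc
  rw [norm_normalizedTuple_sq]
  refine div_le_of_le_mul₀ (Nat.cast_nonneg _) (sq_nonneg c) ?_
  calc ∑ k, ‖ξ k‖ ^ 2 ≤ ∑ _k : κ, c ^ 2 := by gcongr; exact h _
    _ = c ^ 2 * Fintype.card κ := by simp [mul_comm]

lemma norm_normalizedTuple_eq_one [Nonempty κ] {ξ : κ → E} (h : ∀ k, ‖ξ k‖ = 1) :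
    ‖normalizedTuple ξ‖ = 1 := by
  rw [← sq_eq_sq₀ (norm_nonneg _) zero_le_one, norm_normalizedTuple_sq]
  simp [h]

lemma norm_apply_le_sqrt_card_mul_norm_normalizedTuple (ξ : κ → E) (k : κ) :
    ‖ξ k‖ ≤ √(Fintype.card κ : ℝ) * ‖normalizedTuple ξ‖ := by
  have : Nonempty κ := ⟨k⟩
  have hcard : 0 < √(Fintype.card κ : ℝ) := Real.sqrt_pos.2 (Nat.cast_pos.2 Fintype.card_pos)
  have hk := PiLp.norm_apply_le (normalizedTuple ξ) k
  rwa [normalizedTuple_apply, norm_smul, norm_inv, Complex.norm_real,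
    Real.norm_of_nonneg hcard.le, inv_mul_le_iff₀ hcard] at hk

end NormalizedTuple

namespace StarBimodule

section Amplification

variable {A E : Type*} [CStarAlgebra A] [NormedAddCommGroup E] [InnerProductSpace ℂ E]
  [CompleteSpace E] (κ : Type*) [Fintype κ]

/-- The Hilbert sum of copies of a bimodule indexed by `κ`. It turns a statement about tuples into
one about single vectors. -/
def amplify (b : StarBimodule A E) : StarBimodule A (PiLp 2 fun _ : κ => E) where
  left := (diagonalAmplification κ).comp b.left
  rightHom := (diagonalAmplification κ).comp b.rightHom
  left_rightHom_comm x y ζ := by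
    ext k
    exact b.left_rightHom_comm x y (ζ k)

variable {κ} (b : StarBimodule A E)

lemma amplify_left_normalizedTuple (x : A) (ξ : κ → E) :
    (b.amplify κ).left x (normalizedTuple ξ) = normalizedTuple fun k => b.left x (ξ k) := by
  ext k
  exact map_smul (b.left x) _ _

lemma amplify_right_normalizedTuple (x : A) (ξ : κ → E) :
    (b.amplify κ).right x (normalizedTuple ξ) = normalizedTuple fun k => b.right x (ξ k) := by
  ext k
  exact map_smul (b.right x) _ _

lemma amplify_defect_normalizedTuple (x : A) (ξ η : κ → E) :
    (b.amplify κ).defect (normalizedTuple ξ) (normalizedTuple η) x =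
      normalizedTuple fun k => b.defect (ξ k) (η k) x := by
  rw [defect_apply, amplify_left_normalizedTuple, amplify_right_normalizedTuple, ← map_sub]
  rfl

lemma AlmostRelates.amplify {ι : Type*} [Fintype ι] {b : StarBimodule A E} {δ : ℝ} {a : ι → A}
    {ξ η : κ → E} (hδ : 0 ≤ δ) (h : ∀ k, b.AlmostRelates δ a (ξ k) (η k)) :
    (b.amplify κ).AlmostRelates δ a (normalizedTuple ξ) (normalizedTuple η) where
  norm_left_one_sub_le := by
    rw [amplify_left_normalizedTuple]
    exact norm_normalizedTuple_le hδ fun k => (h k).norm_left_one_sub_le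
  norm_right_one_sub_le := by
    rw [amplify_right_normalizedTuple]
    exact norm_normalizedTuple_le hδ fun k => (h k).norm_right_one_sub_le
  norm_left_one_sub_mul_star_le := by
    rw [amplify_left_normalizedTuple]
    exact norm_normalizedTuple_le hδ fun k => (h k).norm_left_one_sub_mul_star_le
  norm_right_one_sub_mul_star_le := by
    rw [amplify_right_normalizedTuple]
    exact norm_normalizedTuple_le hδ fun k => (h k).norm_right_one_sub_mul_star_le
  sum_norm_defect_sq_le := by
    simp only [amplify_defect_normalizedTuple, norm_normalizedTuple_sq]
    rw [← Finset.sum_div, Finset.sum_comm]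
    refine div_le_of_le_mul₀ (Nat.cast_nonneg _) hδ ?_
    calc ∑ k, ∑ j, ‖b.defect (ξ k) (η k) (a j)‖ ^ 2 ≤ ∑ _k : κ, δ :=
          Finset.sum_le_sum fun k _ => (h k).sum_norm_defect_sq_le
      _ = δ * Fintype.card κ := by simp [mul_comm]

end Amplification

end StarBimodule

theorem almost_unitary_equivalence_general (n : ℕ) {ε : ℝ} (hε : 0 < ε) :
    ∃ δ : ℝ, 0 < δ ∧
      ∀ (A : Type u) (E : Type v) [CStarAlgebra A] [NormedAddCommGroup E]
        [InnerProductSpace ℂ E] [CompleteSpace E] (b : StarBimodule A E) (ξ η : Fin n → E),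
        (∀ k, ‖ξ k‖ = 1) → (∀ k, ‖η k‖ = 1) →
          (∃ (p : ℕ) (a : Fin p → A), ∀ k, b.AlmostRelates δ a (ξ k) (η k)) →
          ∃ u ∈ unitary A, ∀ k, ‖b.defect (ξ k) (η k) u‖ < ε := by
  rcases n.eq_zero_or_pos with rfl | hn
  · exact ⟨1, one_pos, fun A E _ _ _ _ b ξ η _ _ _ => ⟨1, one_mem _, fun k => k.elim0⟩⟩
  have : Nonempty (Fin n) := ⟨⟨0, hn⟩⟩
  have hcard : 0 < √(n : ℝ) := Real.sqrt_pos.2 (Nat.cast_pos.2 hn)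
  obtain ⟨τ, hτ, hunitary⟩ :=
    StarBimodule.exists_forall_hasIntertwiningSystem_exists_unitary.{u, v} (div_pos hε hcard)
  obtain ⟨T, hT, hT_le, hTτ⟩ : ∃ T : ℝ, 0 < T ∧ 5 * T ≤ 1 ∧ 101 * T ≤ τ ^ 2 :=
    ⟨min (1 / 5) (τ ^ 2 / 101), by positivity, by linarith [min_le_left (1 / 5) (τ ^ 2 / 101)],
      by linarith [min_le_right (1 / 5) (τ ^ 2 / 101)]⟩
  refine ⟨T ^ 2, by positivity, fun A E _ _ _ _ b ξ η hξ hη ⟨p, a, ha⟩ => ?_⟩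
  let _ := CStarAlgebra.spectralOrder A
  let _ := CStarAlgebra.spectralOrderedRing A
  have hξ_norm := norm_normalizedTuple_eq_one hξ
  have hη_norm := norm_normalizedTuple_eq_one hη
  have hsystem := (StarBimodule.AlmostRelates.amplify (sq_nonneg T) ha).hasIntertwiningSystem
    hξ_norm hη_norm hT.le hT_le hτ.le hTτ
  obtain ⟨u, hu, hdefect⟩ := hunitary A _ (b.amplify (Fin n)) _ _ hξ_norm hη_norm hsystem
  refine ⟨u, hu, fun k => ?_⟩
  rw [b.amplify_defect_normalizedTuple, lt_div_iff₀' hcard] at hdefect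
  refine lt_of_le_of_lt ?_ hdefect
  simpa using norm_apply_le_sqrt_card_mul_norm_normalizedTuple
    (fun k => b.defect (ξ k) (η k) u) k

section VonNeumann

variable {K : Type*} [NormedAddCommGroup K] [InnerProductSpace ℂ K] [CompleteSpace K]

/-- The C*-algebra structure inherited from `B(K)`; a von Neumann algebra is norm closed because it
is a centralizer. -/
abbrev vonNeumannCStarAlgebra (M : VonNeumannAlgebra K) : CStarAlgebra M :=
  have isClosed_coe : IsClosed (M.toStarSubalgebra : Set (K →L[ℂ] K)) := by
    have := Set.isClosed_centralizer (Set.centralizer (M : Set (K →L[ℂ] K)))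
    rwa [M.centralizer_centralizer] at this
  @StarSubalgebra.cstarAlgebra _ _ _ _ _ _ _ M.toStarSubalgebra isClosed_coe

variable {M : VonNeumannAlgebra K} {E : Type*} [NormedAddCommGroup E] [InnerProductSpace ℂ E]
  [CompleteSpace E]

attribute [local instance] vonNeumannCStarAlgebra

/-- A Hilbert bimodule over a von Neumann algebra, as a bimodule over the underlying C*-algebra. -/
def HilbertBimodule.toStarBimodule (b : HilbertBimodule M E) : StarBimodule M E where
  left := b.L
  rightHom := b.R
  left_rightHom_comm x y ζ := b.commutes x y.unop ζ

lemma HilbertBimodule.AlmostRelated.exists_almostRelates {b : HilbertBimodule M E} {δ : ℝ}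
    {n : ℕ} {ξ η : Fin n → E} (h : b.AlmostRelated δ ξ η) (hδ : 0 < δ) :
    ∃ (p : ℕ) (a : Fin p → M), ∀ k, b.toStarBimodule.AlmostRelates δ a (ξ k) (η k) := by
  obtain ⟨p, a, ha⟩ := h δ hδ
  refine ⟨p, a, fun k => ?_⟩
  obtain ⟨hleft, -, hright, -, -, hleft_star, -, hright_star, hdefect⟩ := ha k
  exact ⟨hleft.le, hright.le, hleft_star.le, hright_star.le, hdefect.le⟩

end VonNeumann

theorem almost_unitary_equivalence (n : ℕ) (ε : ℝ) (hε : 0 < ε) :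
    ∃ δ : ℝ, 0 < δ ∧
      ∀ (K : Type u) (_ : NormedAddCommGroup K) (_ : InnerProductSpace ℂ K)
        (_ : CompleteSpace K) (M : VonNeumannAlgebra K)
        (E : Type v) (_ : NormedAddCommGroup E) (_ : InnerProductSpace ℂ E)
        (_ : CompleteSpace E) (b : HilbertBimodule M E)
        (ξ η : Fin n → E), (∀ k, ‖ξ k‖ = 1) → (∀ k, ‖η k‖ = 1) →
          b.AlmostRelated δ ξ η →
          ∃ u : M, u ∈ unitary M ∧
            ∀ k, ‖b.lsmul u (ξ k) - b.rsmul (η k) u‖ < ε := by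
  obtain ⟨δ, hδ, hunitary⟩ := almost_unitary_equivalence_general.{u, v} n hε
  refine ⟨δ, hδ, fun K _ _ _ M E _ _ _ b ξ η hξ hη h => ?_⟩
  let _ := vonNeumannCStarAlgebra M
  exact hunitary M E b.toStarBimodule ξ η hξ hη (h.exists_almostRelates hδ)
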